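/- arXiv:2203.02976 — 4 statements merged into one kernel-verified Lean document; each statement's English description precedes it below -/
import Mathlib

section
/- Let k be a field, m ≥ 1, and let A = k[X₁^{±1}, …, X_{m+1}^{±1}][Y] be the polynomial ring in one variable Y over the Laurent polynomial ring in m+1 variables over k. Let 𝔞 ⊆ A be an ideal generated by m elements such that the Krull dimension of A/((Y) + 𝔞) equals 1. Then 𝔞 equals its saturation 𝔞 : Y^∞ with respect to Y; equivalently, the image of Y in A/𝔞 is a nonzerodivisor. -/
/-!
Every maximal ideal `P` of `A` contains a regular sequence of length `m + 2`: a polynomial or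
Laurent variable adds a monic polynomial in it to a regular sequence contained in the contraction
of `P`. If multiplication by `Y` is not injective on `A / 𝔞`, this is already visible in `R = A_P`
for some maximal `P` containing `𝔞` and `Y`. There the `m + 1` elements consisting of the
generators of `𝔞` and `Y` cut out a quotient of dimension at most `1`, and this forces them to be a
regular sequence, one element at a time. Indeed if a finite `R`-module `M` has depth at least `n`
and `dim (M / xM) < n`, then `x` avoids every associated prime `p` of `M`: the depth of `M` is at
most `dim (R / p)`, which would be at most `dim (M / xM)` if `x ∈ p`. Dividing by the regular
element `x` then lowers the depth by one.
-/

open Polynomial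

noncomputable section

/-- The ring `A = k[X₁^{±1}, …, X_{m+1}^{±1}][Y]`: the polynomial ring in one
variable `Y` over the ring of Laurent polynomials in `m + 1` variables over
`k` (the latter realised as the monoid algebra of `ℤ^{m+1}`). -/
abbrev LaurentPolyRing (k : Type) [Field k] (m : ℕ) : Type :=
  Polynomial (AddMonoidAlgebra k (Fin (m + 1) → ℤ))

section Depth

open RingTheory.Sequence Module CategoryTheory Abelian
open scoped Pointwise

universe u v

variable {R : Type u} [CommRing R] {M : Type v} [AddCommGroup M] [Module R M]

theorem isWeaklyRegular_of_subsingleton [Subsingleton M] (rs : List R) : IsWeaklyRegular M rs :=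
  ⟨fun _ _ => Function.injective_of_subsingleton _⟩

theorem supportDim_nonneg [Nontrivial M] : 0 ≤ supportDim R M :=
  have := (nonempty_support_of_nontrivial (R := R) (M := M)).to_subtype
  Order.krullDim_nonneg

theorem nontrivial_quotSMulTop [Module.Finite R M] [Nontrivial M] {x : R}
    (hx : x ∈ Ideal.jacobson (⊥ : Ideal R)) : Nontrivial (QuotSMulTop x M) :=
  Submodule.Quotient.nontrivial_iff.mpr
    (Submodule.top_ne_pointwise_smul_of_mem_jacobson_annihilator
      (Ideal.jacobson_mono bot_le hx)).symm

theorem ringKrullDim_quotient_le_supportDim [Module.Finite R M] {I : Ideal R}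
    (hI : annihilator R M ≤ I) : ringKrullDim (R ⧸ I) ≤ supportDim R M := by
  rw [supportDim_eq_ringKrullDim_quotient_annihilator]
  exact ringKrullDim_le_of_surjective _ (Ideal.Quotient.factor_surjective hI)

theorem ringKrullDim_quotient_add_one_le_of_lt {p q : Ideal R} [p.IsPrime] (hpq : p < q) :
    ringKrullDim (R ⧸ q) + 1 ≤ ringKrullDim (R ⧸ p) := by
  obtain ⟨x, hxq, hxp⟩ := SetLike.exists_of_lt hpq
  refine ringKrullDim_succ_le_of_surjective _ (Ideal.Quotient.factor_surjective hpq.le)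
    (r := Ideal.Quotient.mk p x) ?_ ?_
  · exact mem_nonZeroDivisors_of_ne_zero (Ideal.Quotient.eq_zero_iff_mem.not.mpr hxp)
  · exact Ideal.Quotient.eq_zero_iff_mem.mpr hxq

theorem torsionBySet_le_smul_torsionBySet {x : R} (hx : IsSMulRegular M x) {s : Set R}
    (h : Submodule.torsionBySet R M s ≤ x • (⊤ : Submodule R M)) :
    Submodule.torsionBySet R M s ≤ Ideal.span {x} • Submodule.torsionBySet R M s := by
  intro z hz
  obtain ⟨w, -, rfl⟩ := (Submodule.mem_smul_pointwise_iff_exists _ _ _).mp (h hz)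
  refine Submodule.smul_mem_smul (Ideal.mem_span_singleton_self x) ?_
  rw [Submodule.mem_torsionBySet_iff] at hz ⊢
  exact fun a => hx.right_eq_zero_of_smul (by rw [smul_comm]; exact hz a)

theorem isSMulRegular_iff_forall_notMem_associatedPrimes [IsNoetherianRing R] {x : R} :
    IsSMulRegular M x ↔ ∀ p ∈ associatedPrimes R M, x ∉ p := by
  have h : x ∈ ⋃ p ∈ associatedPrimes R M, (p : Set R) ↔ ¬ IsSMulRegular M x := by
    rw [biUnion_associatedPrimes_eq_compl_regular]
    rfl
  rw [← not_iff_not, ← h]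
  simp

theorem exists_associatedPrimes_quotSMulTop_gt [IsNoetherianRing R] [Module.Finite R M]
    {p : Ideal R} (hp : p ∈ associatedPrimes R M) {x : R} (hxJ : x ∈ Ideal.jacobson (⊥ : Ideal R))
    (hx : IsSMulRegular M x) : ∃ q ∈ associatedPrimes R (QuotSMulTop x M), p < q := by
  obtain ⟨hp', y, hy⟩ := isAssociatedPrime_iff.mp hp
  let N : Submodule R M := Submodule.torsionBySet R M p
  have hyN : y ∈ N := by
    refine (Submodule.mem_torsionBySet_iff _ _).mpr fun a => ?_
    simpa [hy, Submodule.mem_colon_singleton] using a.2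
  have hN : ¬ N ≤ x • (⊤ : Submodule R M) := by
    intro h
    have hbot : N = ⊥ := Submodule.eq_bot_of_le_smul_of_le_jacobson_bot _ N
      (IsNoetherian.noetherian N) (torsionBySet_le_smul_torsionBySet hx h) (by simpa using hxJ)
    have hy0 : y = 0 := by simpa [hbot] using hyN
    exact hp'.ne_top (by simp [hy, hy0])
  -- `z` is killed by `p` and not divisible by `x`: its class in `M / xM` is killed by `p` and `x`.
  obtain ⟨z, hzN, hzx⟩ := Set.not_subset.mp hN
  let z' : QuotSMulTop x M := Submodule.Quotient.mk z
  obtain ⟨q, hq, hzq⟩ := exists_le_isAssociatedPrime_of_isNoetherianRing R z'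
    fun h => hzx ((Submodule.Quotient.mk_eq_zero _).mp h)
  have hpq : p ≤ q := fun a ha => hzq <| Submodule.mem_colon_singleton.mpr <| by
    rw [← Submodule.Quotient.mk_smul, (Submodule.mem_torsionBySet_iff _ _).mp hzN ⟨a, ha⟩]
    simp
  have hxq : x ∈ q := hzq <| Submodule.mem_colon_singleton.mpr <| by
    rw [← Submodule.Quotient.mk_smul, Submodule.mem_bot, Submodule.Quotient.mk_eq_zero]
    exact Submodule.smul_mem_pointwise_smul _ _ _ trivial
  exact ⟨q, hq, lt_of_le_not_ge hpq fun h =>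
    isSMulRegular_iff_forall_notMem_associatedPrimes.mp hx p hp (h hxq)⟩

theorem length_le_ringKrullDim_quotient_of_mem_associatedPrimes [IsNoetherianRing R]
    [Module.Finite R M] {rs : List R} (hrs : ∀ r ∈ rs, r ∈ Ideal.jacobson (⊥ : Ideal R))
    (hreg : IsWeaklyRegular M rs) {p : Ideal R} (hp : p ∈ associatedPrimes R M) :
    rs.length ≤ ringKrullDim (R ⧸ p) := by
  induction rs generalizing M p with
  | nil =>
    have := Ideal.Quotient.nontrivial_iff.mpr hp.isPrime.ne_top
    exact ringKrullDim_nonneg_of_nontrivial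
  | cons x rs ih =>
    rw [List.forall_mem_cons] at hrs
    rw [isWeaklyRegular_cons_iff] at hreg
    obtain ⟨q, hq, hpq⟩ := exists_associatedPrimes_quotSMulTop_gt hp hrs.1 hreg.1
    have := hp.isPrime
    calc ((x :: rs).length : WithBot ℕ∞) = rs.length + 1 := by simp
      _ ≤ ringKrullDim (R ⧸ q) + 1 := by gcongr; exact ih hrs.2 hreg.2 hq
      _ ≤ ringKrullDim (R ⧸ p) := ringKrullDim_quotient_add_one_le_of_lt hpq

/-- `M` has depth at least `n` on `I`: some `M`-regular sequence of length `n` consists of elements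
of `I`. Sequences are only required to be weakly regular, so that the zero module has every
depth. -/
def HasDepthGE (I : Ideal R) (M : Type v) [AddCommGroup M] [Module R M] (n : ℕ) : Prop :=
  ∃ rs : List R, rs.length = n ∧ (∀ r ∈ rs, r ∈ I) ∧ IsWeaklyRegular M rs

namespace HasDepthGE

theorem zero (I : Ideal R) : HasDepthGE I M 0 :=
  ⟨[], rfl, by simp, .nil R M⟩

theorem of_flat {S : Type*} [CommRing S] [Algebra R S] [Module.Flat R S] {I : Ideal R} {J : Ideal S}
    (hIJ : I ≤ J.comap (algebraMap R S)) {n : ℕ} (h : HasDepthGE I R n) : HasDepthGE J S n := by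
  obtain ⟨rs, hlen, hmem, hreg⟩ := h
  exact ⟨rs.map (algebraMap R S), by simpa using hlen,
    List.forall_mem_map.mpr fun r hr => hIJ (hmem r hr), hreg.of_flat⟩

theorem of_ringEquiv {A B : Type*} [CommRing A] [CommRing B] (e : A ≃+* B)
    {P : Ideal B} {n : ℕ} (h : HasDepthGE (P.comap e) A n) : HasDepthGE P B n := by
  let := e.toRingHom.toAlgebra
  have : Module.Flat A B := RingHom.Flat.of_bijective e.bijective
  exact h.of_flat le_rfl

variable [IsNoetherianRing R] [Module.Finite R M] {I : Ideal R} {n : ℕ}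

theorem isSMulRegular_of_supportDim_lt (hI : I ≤ Ideal.jacobson ⊥) (h : HasDepthGE I M n) {x : R}
    (hx : supportDim R (QuotSMulTop x M) < n) : IsSMulRegular M x := by
  obtain ⟨rs, hn, hmem, hreg⟩ := h
  refine isSMulRegular_iff_forall_notMem_associatedPrimes.mpr fun p hp hxp => hx.not_ge ?_
  have hann : annihilator R (QuotSMulTop x M) ≤ p := by
    have : (⟨p, hp.isPrime⟩ : PrimeSpectrum R) ∈ support R (QuotSMulTop x M) := by
      rw [support_quotSMulTop]
      refine ⟨mem_support_iff_of_finite.mpr ?_, by simpa using hxp⟩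
      simpa [Submodule.annihilator_top] using hp.annihilator_le
    exact mem_support_iff_of_finite.mp this
  have hlen := length_le_ringKrullDim_quotient_of_mem_associatedPrimes
    (fun r hr => hI (hmem r hr)) hreg hp
  exact (hn ▸ hlen).trans (ringKrullDim_quotient_le_supportDim hann)

end HasDepthGE

theorem hasDepthGE_iff_subsingleton_ext [IsNoetherianRing R] [Small.{v} R] [Module.Finite R M]
    [Nontrivial M] {I : Ideal R} (hI : I ≤ Ideal.jacobson ⊥) {n : ℕ} :
    HasDepthGE I M n ↔ ∀ i < n,
      Subsingleton (Ext (ModuleCat.of R (Shrink.{v} (R ⧸ I))) (ModuleCat.of R M) i) := by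
  have hJ : I ≤ (annihilator R M).jacobson := hI.trans (Ideal.jacobson_mono bot_le)
  have hlt : I • (⊤ : Submodule R M) < ⊤ :=
    (Submodule.top_ne_ideal_smul_of_le_jacobson_annihilator hJ).symm.lt_top
  have hrees := (ModuleCat.exists_isRegular_tfae I n (ModuleCat.of R M) hlt).out 3 1
  refine Iff.trans (exists_congr fun rs => and_congr_right fun _ => and_congr_right fun hrs => ?_)
    hrees
  exact (isRegular_iff_isWeaklyRegular_of_subset_jacobson_annihilator
    fun r hr => hJ (hrs r hr)).symm

theorem HasDepthGE.quotSMulTop [IsNoetherianRing R] [Small.{v} R] [Module.Finite R M]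
    [Nontrivial M] {I : Ideal R} (hI : I ≤ Ideal.jacobson ⊥) {n : ℕ}
    (h : HasDepthGE I M (n + 1)) {x : R} (hxI : x ∈ I) (hx : IsSMulRegular M x) :
    HasDepthGE I (QuotSMulTop x M) n := by
  have := nontrivial_quotSMulTop (M := M) (hI hxI)
  rw [hasDepthGE_iff_subsingleton_ext hI] at h ⊢
  intro i hi
  have zero₁ := AddCommGrpCat.isZero_of_iff_subsingleton.mpr (h i (by omega))
  have zero₂ := AddCommGrpCat.isZero_of_iff_subsingleton.mpr (h (i + 1) (by omega))
  have hx' : IsSMulRegular (ModuleCat.of R M) x := hx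
  exact AddCommGrpCat.subsingleton_of_isZero <| ShortComplex.Exact.isZero_of_both_zeros
    (Ext.covariant_sequence_exact₃' _ hx'.smulShortComplex_shortExact i (i + 1) rfl)
    (zero₁.eq_zero_of_src _) (zero₂.eq_zero_of_tgt _)

theorem supportDim_le_supportDim_quotient_ofList_add_length [IsNoetherianRing R]
    [Module.Finite R M] {rs : List R} (hrs : ∀ r ∈ rs, r ∈ Ideal.jacobson (⊥ : Ideal R)) :
    supportDim R M ≤
      supportDim R (M ⧸ Ideal.ofList rs • (⊤ : Submodule R M)) + rs.length := by
  induction rs generalizing M with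
  | nil =>
    rw [Ideal.ofList_nil, Submodule.bot_smul, List.length_nil, Nat.cast_zero, add_zero]
    exact (supportDim_eq_of_equiv (Submodule.quotEquivOfEqBot (⊥ : Submodule R M) rfl)).ge
  | cons x rs ih =>
    rw [List.forall_mem_cons] at hrs
    rw [supportDim_eq_of_equiv (Submodule.quotOfListConsSMulTopEquivQuotSMulTopInner M x rs)]
    calc supportDim R M ≤ supportDim R (QuotSMulTop x M) + 1 :=
          supportDim_le_supportDim_quotSMulTop_succ_of_mem_jacobson
            (Ideal.jacobson_mono bot_le hrs.1)
      _ ≤ _ := by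
          rw [List.length_cons, Nat.cast_add_one, ← add_assoc]
          gcongr
          exact ih hrs.2

theorem HasDepthGE.isWeaklyRegular_of_supportDim_le [IsNoetherianRing R] [Small.{v} R]
    [Module.Finite R M] {I : Ideal R} (hI : I ≤ Ideal.jacobson ⊥) {n : ℕ} (h : HasDepthGE I M n)
    {rs : List R} (hrs : ∀ r ∈ rs, r ∈ I)
    (hdim : supportDim R (M ⧸ Ideal.ofList rs • (⊤ : Submodule R M)) + rs.length ≤ n) :
    IsWeaklyRegular M rs := by
  induction rs generalizing M n with
  | nil => exact .nil R M
  | cons x rs ih =>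
    rcases subsingleton_or_nontrivial M with _ | _
    · exact isWeaklyRegular_of_subsingleton _
    rw [List.forall_mem_cons] at hrs
    rw [supportDim_eq_of_equiv (Submodule.quotOfListConsSMulTopEquivQuotSMulTopInner M x rs),
      List.length_cons, Nat.cast_add_one, ← add_assoc] at hdim
    have hlt : supportDim R (QuotSMulTop x M) < n :=
      (supportDim_le_supportDim_quotient_ofList_add_length
        fun r hr => hI (hrs.2 r hr)).trans_lt (ENat.WithBot.add_one_le_natCast_iff.mp hdim)
    have hx := h.isSMulRegular_of_supportDim_lt hI hlt
    cases n with
    | zero =>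
      have := nontrivial_quotSMulTop (M := M) (hI hrs.1)
      exact absurd hlt supportDim_nonneg.not_gt
    | succ n =>
      rw [Nat.cast_add_one, ENat.WithBot.add_le_add_one_right_iff] at hdim
      exact (isWeaklyRegular_cons_iff _ _ _).mpr ⟨hx, ih (h.quotSMulTop hI hrs.1 hx) hrs.2 hdim⟩

end Depth

section Polynomial

variable {R : Type*} [CommRing R]

theorem mem_map_C_of_monic_mul_mem {I : Ideal R} {f g : R[X]} (hf : f.Monic)
    (h : f * g ∈ I.map C) : g ∈ I.map C := by
  rw [← Ideal.mk_ker (I := I), ← ker_mapRingHom, RingHom.mem_ker] at h ⊢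
  rw [map_mul] at h
  exact (hf.map _).mul_right_eq_zero_iff.mp h

open RingTheory.Sequence in
theorem HasDepthGE.polynomial_of_monic {P : Ideal R[X]} {f : R[X]} (hf : f.Monic) (hfP : f ∈ P)
    {n : ℕ} (h : HasDepthGE (P.comap C) R n) : HasDepthGE P R[X] (n + 1) := by
  obtain ⟨rs, hlen, hmem, hreg⟩ := h
  refine ⟨rs.map C ++ [f], by simp [hlen], ?_, ?_⟩
  · simpa [or_imp, forall_and, hfP] using hmem
  · rw [isWeaklyRegular_append_iff, isWeaklyRegular_singleton_iff,
      isSMulRegular_quotient_iff_mem_of_smul_mem, smul_eq_mul, Ideal.mul_top, ← Ideal.map_ofList]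
    exact ⟨hreg.of_flat (S := R[X]), fun g => mem_map_C_of_monic_mul_mem hf⟩

theorem exists_monic_mem_of_isMaximal [IsJacobsonRing R] (P : Ideal R[X]) [P.IsMaximal] :
    ∃ f ∈ P, f.Monic := by
  obtain ⟨f, hf, hf0⟩ := quotient_mk_comp_C_isIntegral_of_isJacobsonRing P (Ideal.Quotient.mk P X)
  refine ⟨f, ?_, hf⟩
  rw [← Ideal.Quotient.eq_zero_iff_mem, ← hf0, ← hom_eval₂, eval₂_C_X]

theorem hasDepthGE_polynomial [IsJacobsonRing R] {n : ℕ}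
    (h : ∀ P : Ideal R, P.IsMaximal → HasDepthGE P R n) (P : Ideal R[X]) (hP : P.IsMaximal) :
    HasDepthGE P R[X] (n + 1) := by
  obtain ⟨f, hfP, hf⟩ := exists_monic_mem_of_isMaximal P
  exact .polynomial_of_monic hf hfP (h _ (isMaximal_comap_C_of_isJacobsonRing P))

theorem hasDepthGE_laurentPolynomial [IsJacobsonRing R] {n : ℕ}
    (h : ∀ P : Ideal R, P.IsMaximal → HasDepthGE P R n) (P : Ideal (LaurentPolynomial R))
    (hP : P.IsMaximal) : HasDepthGE P (LaurentPolynomial R) (n + 1) := by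
  have hP' : (P.under R[X]).IsMaximal :=
    ((IsLocalization.isMaximal_iff_isMaximal_disjoint (LaurentPolynomial R) X P).mp hP).1
  have : Module.Flat R[X] (LaurentPolynomial R) :=
    IsLocalization.flat _ (Submonoid.powers (X : R[X]))
  exact (hasDepthGE_polynomial h _ hP').of_flat le_rfl

theorem hasDepthGE_addMonoidAlgebra_int [IsJacobsonRing R] {d : ℕ}
    (h : ∀ P : Ideal R, P.IsMaximal → HasDepthGE P R d) (n : ℕ)
    (P : Ideal (AddMonoidAlgebra R (Fin n → ℤ))) (hP : P.IsMaximal) :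
    HasDepthGE P (AddMonoidAlgebra R (Fin n → ℤ)) (d + n) := by
  induction n with
  | zero =>
    let e := (AddMonoidAlgebra.uniqueRingEquiv (R := R) (Fin 0 → ℤ)).symm
    exact .of_ringEquiv e (h _ (Ideal.comap_isMaximal_of_equiv e))
  | succ n ih =>
    have : IsJacobsonRing (AddMonoidAlgebra R (Fin n → ℤ)) := isJacobsonRing_of_finiteType (A := R)
    let c : (Fin (n + 1) → ℤ) ≃+ ℤ × (Fin n → ℤ) :=
      (Fin.consLinearEquiv ℤ fun _ => ℤ).symm.toAddEquiv
    let e : LaurentPolynomial (AddMonoidAlgebra R (Fin n → ℤ)) ≃+*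
        AddMonoidAlgebra R (Fin (n + 1) → ℤ) :=
      ((AddMonoidAlgebra.mapDomainRingEquiv R c).trans AddMonoidAlgebra.curryRingEquiv).symm
    exact .of_ringEquiv e (hasDepthGE_laurentPolynomial ih _ (Ideal.comap_isMaximal_of_equiv e))

end Polynomial

section Localization

variable {A : Type*} [CommRing A]

theorem ringKrullDim_le_of_isLocalization (S : Submonoid A) (B : Type*) [CommRing B] [Algebra A B]
    [IsLocalization S B] : ringKrullDim B ≤ ringKrullDim A :=
  Order.krullDim_le_of_strictMono (PrimeSpectrum.comap (algebraMap A B)) <|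
    Monotone.strictMono_of_injective (fun _ _ h => Ideal.comap_mono h)
      (PrimeSpectrum.localization_comap_injective B S)

theorem ringKrullDim_quotient_map_le_of_isLocalization (S : Submonoid A) (B : Type*) [CommRing B]
    [Algebra A B] [IsLocalization S B] (I : Ideal A) :
    ringKrullDim (B ⧸ I.map (algebraMap A B)) ≤ ringKrullDim (A ⧸ I) :=
  ringKrullDim_le_of_isLocalization (Algebra.algebraMapSubmonoid (A ⧸ I) S) _

theorem HasDepthGE.isWeaklyRegular_map_localization [IsNoetherianRing A] {P : Ideal A} [P.IsPrime]
    {n : ℕ} (h : HasDepthGE P A n) {rs : List A} (hrs : ∀ r ∈ rs, r ∈ P)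
    (hdim : ringKrullDim (A ⧸ Ideal.ofList rs) + rs.length ≤ n) :
    RingTheory.Sequence.IsWeaklyRegular (Localization.AtPrime P)
      (rs.map (algebraMap A (Localization.AtPrime P))) := by
  let R := Localization.AtPrime P
  have : IsNoetherianRing R := IsLocalization.isNoetherianRing P.primeCompl R inferInstance
  have hP : P ≤ (IsLocalRing.maximalIdeal R).comap (algebraMap A R) :=
    (IsLocalization.AtPrime.under_maximalIdeal R P).ge
  refine (h.of_flat hP).isWeaklyRegular_of_supportDim_le
    (IsLocalRing.maximalIdeal_le_jacobson _) (List.forall_mem_map.mpr fun r hr => hP (hrs r hr)) ?_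
  rw [smul_eq_mul, Ideal.mul_top, Module.supportDim_quotient_eq_ringKrullDim, ← Ideal.map_ofList,
    List.length_map]
  refine le_trans ?_ hdim
  gcongr
  exact ringKrullDim_quotient_map_le_of_isLocalization P.primeCompl R _

theorem isSMulRegular_quotient_of_localization_maximal {I : Ideal A} {y : A}
    (h : ∀ (P : Ideal A) [P.IsMaximal], I ≤ P → y ∈ P → IsSMulRegular
      (Localization.AtPrime P ⧸ I.map (algebraMap A (Localization.AtPrime P)))
      (algebraMap A (Localization.AtPrime P) y)) :
    IsSMulRegular (A ⧸ I) y := by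
  rw [isSMulRegular_quotient_iff_mem_of_smul_mem]
  intro a hya
  by_contra ha
  have hcolon : I.colon {a} ≠ ⊤ := by
    simpa [Ideal.ne_top_iff_one, Submodule.mem_colon_singleton] using ha
  obtain ⟨P, hP, hcolonP⟩ := Ideal.exists_le_maximal _ hcolon
  have hIP : I ≤ P := fun b hb =>
    hcolonP (Submodule.mem_colon_singleton.mpr (I.mul_mem_right a hb))
  have hyP : y ∈ P := hcolonP (Submodule.mem_colon_singleton.mpr hya)
  have haI : algebraMap A (Localization.AtPrime P) a ∈ I.map (algebraMap A _) := by
    refine (isSMulRegular_quotient_iff_mem_of_smul_mem _ _).mp (h P hIP hyP) _ ?_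
    rw [smul_eq_mul, ← map_mul]
    exact Ideal.mem_map_of_mem _ hya
  obtain ⟨s, hsP, hsa⟩ :=
    (IsLocalization.algebraMap_mem_map_algebraMap_iff P.primeCompl _ _ _).mp haI
  exact hsP (hcolonP (Submodule.mem_colon_singleton.mpr hsa))

theorem isSMulRegular_quotient_ofList_of_ringKrullDim_le [IsNoetherianRing A] {n : ℕ}
    (hA : ∀ P : Ideal A, P.IsMaximal → HasDepthGE P A n) {rs : List A} {y : A}
    (hdim : ringKrullDim (A ⧸ Ideal.ofList (rs ++ [y])) + (rs ++ [y]).length ≤ n) :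
    IsSMulRegular (A ⧸ Ideal.ofList rs) y := by
  refine isSMulRegular_quotient_of_localization_maximal fun P hP hrsP hyP => ?_
  have hmem : ∀ r ∈ rs ++ [y], r ∈ P := by
    simpa [or_imp, forall_and, hyP] using fun r hr => hrsP (Ideal.subset_span hr)
  have hreg := (hA P hP).isWeaklyRegular_map_localization hmem hdim
  rw [List.map_append, List.map_singleton, RingTheory.Sequence.isWeaklyRegular_append_iff,
    RingTheory.Sequence.isWeaklyRegular_singleton_iff, smul_eq_mul, Ideal.mul_top,
    ← Ideal.map_ofList] at hreg
  exact hreg.2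

end Localization

theorem ideal_eq_saturation_of_dim_one_general {A : Type*} [CommRing A] [IsNoetherianRing A]
    {n : ℕ} (hA : ∀ P : Ideal A, P.IsMaximal → HasDepthGE P A n) (gens : Finset A) (y : A)
    (hdim : ringKrullDim (A ⧸ (Ideal.span {y} ⊔ Ideal.span (gens : Set A))) + gens.card + 1 ≤ n) :
    (∀ a : A, (∃ k : ℕ, y ^ k * a ∈ Ideal.span (gens : Set A)) ↔ a ∈ Ideal.span (gens : Set A)) ∧
    (∀ a : A, y * a ∈ Ideal.span (gens : Set A) → a ∈ Ideal.span (gens : Set A)) := by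
  have hgens : Ideal.ofList gens.toList = Ideal.span (gens : Set A) := by simp [Ideal.ofList]
  have hreg : IsSMulRegular (A ⧸ Ideal.span (gens : Set A)) y := by
    rw [← hgens] at hdim ⊢
    refine isSMulRegular_quotient_ofList_of_ringKrullDim_le hA ?_
    rw [Ideal.ofList_append, Ideal.ofList_singleton, sup_comm]
    simpa [add_assoc] using hdim
  have hmem (k : ℕ) (a : A) := (isSMulRegular_quotient_iff_mem_of_smul_mem _ _).mp (hreg.pow k) a
  exact ⟨fun a => ⟨fun ⟨k, hk⟩ => hmem k a hk, fun ha => ⟨0, by simpa using ha⟩⟩,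
    by simpa using hmem 1⟩

theorem hasDepthGE_laurentPolyRing (k : Type) [Field k] (m : ℕ) (P : Ideal (LaurentPolyRing k m))
    (hP : P.IsMaximal) : HasDepthGE P (LaurentPolyRing k m) (m + 2) := by
  have : IsJacobsonRing (AddMonoidAlgebra k (Fin (m + 1) → ℤ)) :=
    isJacobsonRing_of_finiteType (A := k)
  have h := hasDepthGE_addMonoidAlgebra_int (R := k) (fun P _ => .zero P) (m + 1)
  simpa using hasDepthGE_polynomial h P hP

/-- **Proposition 4.7 (key commutative-algebra step)** of the paper.  Let
`A = k[X₁^{±1}, …, X_{m+1}^{±1}][Y]` and let `𝔞 ⊆ A` be an ideal generated by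
`m` elements such that the Krull dimension of `A/((Y) + 𝔞)` equals `1`.  Then
`𝔞` equals its saturation `𝔞 : Y^∞` with respect to `Y`; equivalently, the
image of `Y` in `A/𝔞` is a nonzerodivisor. -/
theorem ideal_eq_saturation_of_dim_one
    (k : Type) [Field k] (m : ℕ) (hm : 1 ≤ m)
    (𝔞 : Ideal (LaurentPolyRing k m))
    (gens : Finset (LaurentPolyRing k m))
    (hcard : gens.card = m)
    (hspan : Ideal.span (gens : Set (LaurentPolyRing k m)) = 𝔞)
    (hdim : ringKrullDim
        (LaurentPolyRing k m ⧸
          (Ideal.span {(X : LaurentPolyRing k m)} ⊔ 𝔞)) = 1) :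
    (∀ a : LaurentPolyRing k m, (∃ n : ℕ, X ^ n * a ∈ 𝔞) ↔ a ∈ 𝔞) ∧
    (∀ a : LaurentPolyRing k m, X * a ∈ 𝔞 → a ∈ 𝔞) := by
  have : IsNoetherianRing (AddMonoidAlgebra k (Fin (m + 1) → ℤ)) :=
    Algebra.FiniteType.isNoetherianRing k _
  subst hspan
  refine ideal_eq_saturation_of_dim_one_general (hasDepthGE_laurentPolyRing k m) gens X ?_
  rw [hdim, hcard]
  exact_mod_cast (by omega : 1 + m + 1 ≤ m + 2)
end
end

section
/- Let k be a field and f = Σ_{(i,j)∈ℤ²} c_{ij} x^i y^j a nonzero Laurent polynomial in k[x^{±1},y^{±1}], with Newton polygon Δ the convex hull of {(i,j) : c_{ij} ≠ 0}. Let ℓ be an edge of Δ whose normal vector is the primitive vector β = (β₁,β₂) ∈ ℤ² (so that β₁i + β₂j attains its minimum over Δ exactly on ℓ), and choose δ₁, δ₂ ∈ ℤ with δ₁β₂ − δ₂β₁ = 1. Let F ∈ k[X,Y] with Y ∤ F and n_X, n_Y ∈ ℤ be determined by f(X^{δ₁}Y^{β₁}, X^{δ₂}Y^{β₂}) = X^{n_X}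 Y^{n_Y} F(X,Y). If (i₀,j₀), …, (i_l,j_l) are the lattice points of ℓ ∩ ℤ², ordered so that (i_r,j_r) = (i₀,j₀) + r(β₂,−β₁), then F(X,0) = X^d · Σ_{r=0}^{l} c_{i_r j_r} X^r for some d ∈ ℕ. -/
/-!
Unimodularity makes the substitution an injection on exponents, so `F` has the same coefficients as
`f`, moved to new places. The `Y`-exponent of the image of `xⁱyʲ` is `β₁ i + β₂ j`. Comparing the
least `Y`-exponent on the two sides of `f(X^{δ₁}Y^{β₁}, X^{δ₂}Y^{β₂}) = X^{n_X} Y^{n_Y} F(X, Y)`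
gives `n_Y = m`, so the row `Y = 0` of `F` comes from the line through `ℓ`. One step along this line
multiplies the image monomial by `X`, because `δ₁ β₂ - δ₂ β₁ = 1`.
-/

open Finsupp Function

section MapDomain

variable {α γ M : Type*} [AddCommMonoid M]

theorem apply_eq_apply_of_mapDomain_eq_mapDomain {α' : Type*} {φ : α → γ} {ψ : α' → γ}
    (hφ : Injective φ) (hψ : Injective ψ) {f : α →₀ M} {F : α' →₀ M}
    (h : mapDomain φ f = mapDomain ψ F) {a : α} {b : α'} (hab : φ a = ψ b) : F b = f a := by
  rw [← mapDomain_apply hφ f a, ← mapDomain_apply hψ F b, h, hab]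

theorem image_support_mapDomain {ι : Type*} {φ : α → γ} (hφ : Injective φ) (f : α →₀ M)
    (w : γ → ι) : w '' (mapDomain φ f).support = (fun a ↦ w (φ a)) '' f.support := by
  classical
  rw [mapDomain_support_of_injective hφ, Finset.coe_image, Set.image_image]

theorem eq_add_of_isLeast_snd_of_mapDomain_eq {A B : Type*} [AddGroup A] [AddGroup B]
    [PartialOrder B] [AddRightMono B] {φ : α → A × B} (hφ : Injective φ)
    {f : α →₀ M} {F : (A × B) →₀ M} {n : A × B} (h : mapDomain φ f = mapDomain (· + n) F)
    {m m' : B} (hf : IsLeast ((fun a ↦ (φ a).2) '' f.support) m)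
    (hF : IsLeast (Prod.snd '' (F.support : Set (A × B))) m') : m = m' + n.2 := by
  have hshift : IsLeast ((fun q : A × B ↦ q.2 + n.2) '' F.support) (m' + n.2) := by
    simpa only [Set.image_image] using
      (show Monotone (· + n.2) from add_left_mono).map_isLeast hF
  rw [← image_support_mapDomain hφ f Prod.snd, h,
    image_support_mapDomain (add_left_injective n)] at hf
  exact hf.unique hshift

end MapDomain

section Exponents

variable {R : Type*} [CommRing R] {δ β : R × R}

/-- The action on exponents of the substitution `x = X^{δ₁} Y^{β₁}`, `y = X^{δ₂} Y^{β₂}`: the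
monomial with exponent `p` becomes the one with exponent `substExponent δ β p`. -/
def substExponent (δ β p : R × R) : R × R :=
  (δ.1 * p.1 + δ.2 * p.2, β.1 * p.1 + β.2 * p.2)

/-- The point `(i_r, j_r) = p + r (β₂, -β₁)` of the line through `p` with normal vector `β`. -/
def edgePoint (β p : R × R) (r : R) : R × R :=
  (p.1 + r * β.2, p.2 - r * β.1)

@[simp]
theorem edgePoint_zero (β p : R × R) : edgePoint β p 0 = p := by
  simp [edgePoint]

theorem substExponent_injective (hδ : δ.1 * β.2 - δ.2 * β.1 = 1) :
    Injective (substExponent δ β) := by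
  have hcofactor : LeftInverse (fun q ↦ (β.2 * q.1 - δ.2 * q.2, δ.1 * q.2 - β.1 * q.1))
      (substExponent δ β) := fun p ↦ by
    ext <;> simp only [substExponent]
    · linear_combination p.1 * hδ
    · linear_combination p.2 * hδ
  exact hcofactor.injective

theorem substExponent_edgePoint (hδ : δ.1 * β.2 - δ.2 * β.1 = 1) (p : R × R) (r : R) :
    substExponent δ β (edgePoint β p r) = substExponent δ β p + (r, 0) := by
  ext <;> simp only [substExponent, edgePoint, Prod.fst_add, Prod.snd_add]
  · linear_combination r * hδ
  · ring

theorem edgePoint_injective (hδ : δ.1 * β.2 - δ.2 * β.1 = 1) (p : R × R) :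
    Injective (edgePoint β p) := fun r s h ↦ by
  simpa [substExponent_edgePoint hδ] using congrArg (substExponent δ β) h

theorem apply_row_eq_apply_edgePoint {M : Type*} [AddCommMonoid M]
    (hδ : δ.1 * β.2 - δ.2 * β.1 = 1) {f F : (R × R) →₀ M} {n : R × R}
    (h : mapDomain (substExponent δ β) f = mapDomain (· + n) F) (p : R × R) (r : R) :
    F ((substExponent δ β p).1 - n.1 + r, (substExponent δ β p).2 - n.2) =
      f (edgePoint β p r) := by
  refine apply_eq_apply_of_mapDomain_eq_mapDomain (substExponent_injective hδ)
    (add_left_injective n) h ?_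
  rw [substExponent_edgePoint hδ]
  ext <;> simp only [Prod.fst_add, Prod.snd_add] <;> ring

end Exponents

theorem newton_edge_restriction_general {M : Type*} [AddCommMonoid M] {f F : (ℤ × ℤ) →₀ M}
    {δ β n p₀ : ℤ × ℤ} {l : ℕ} (hδ : δ.1 * β.2 - δ.2 * β.1 = 1) (hp₀ : f p₀ ≠ 0)
    (hmin : ∀ p ∈ f.support, β.1 * p₀.1 + β.2 * p₀.2 ≤ β.1 * p.1 + β.2 * p.2)
    (hedge : ∀ p ∈ f.support, β.1 * p.1 + β.2 * p.2 = β.1 * p₀.1 + β.2 * p₀.2 →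
      ∃ r : ℕ, r ≤ l ∧ p = edgePoint β p₀ r)
    (hFpoly : ∀ p ∈ F.support, 0 ≤ p.1 ∧ 0 ≤ p.2) (hFY : ∃ p ∈ F.support, p.2 = 0)
    (h : mapDomain (substExponent δ β) f = mapDomain (· + n) F) :
    ∃ d : ℕ, (∀ r : ℤ, F (d + r, 0) = f (edgePoint β p₀ r)) ∧
      ∀ i : ℤ, F (i, 0) ≠ 0 → ∃ r : ℕ, r ≤ l ∧ i = (d : ℤ) + r := by
  have hnY : (substExponent δ β p₀).2 = n.2 := by
    simpa only [zero_add] using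
      eq_add_of_isLeast_snd_of_mapDomain_eq (substExponent_injective hδ) h
        ⟨⟨p₀, mem_support_iff.2 hp₀, rfl⟩, Set.forall_mem_image.2 hmin⟩
        ⟨hFY, Set.forall_mem_image.2 fun p hp ↦ (hFpoly p hp).2⟩
  have hrow (r : ℤ) : F ((substExponent δ β p₀).1 - n.1 + r, 0) = f (edgePoint β p₀ r) := by
    simpa only [hnY, sub_self] using apply_row_eq_apply_edgePoint hδ h p₀ r
  have hd : 0 ≤ (substExponent δ β p₀).1 - n.1 := by
    have hF : F ((substExponent δ β p₀).1 - n.1, 0) = f p₀ := by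
      simpa only [add_zero, edgePoint_zero] using hrow 0
    exact (hFpoly _ (mem_support_iff.2 (hF.trans_ne hp₀))).1
  obtain ⟨d, hd⟩ := Int.eq_ofNat_of_zero_le hd
  rw [hd] at hrow
  refine ⟨d, hrow, fun i hi ↦ ?_⟩
  have hsupp : edgePoint β p₀ (i - d) ∈ f.support := by
    rwa [mem_support_iff, ← hrow, add_sub_cancel]
  have hline := congrArg Prod.snd (substExponent_edgePoint hδ p₀ (i - d))
  obtain ⟨r, hr, hir⟩ := hedge _ hsupp (hline.trans (add_zero _))
  exact ⟨r, hr, sub_eq_iff_eq_add'.1 (edgePoint_injective hδ p₀ hir)⟩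

/-- **Propositions 4.1 and 4.11** of the paper.  Let `f = Σ c_{ij} xⁱ yʲ` be a
nonzero Laurent polynomial over a field `k` (recorded here by its finitely
supported coefficient function on `ℤ²`), and let `ℓ` be an edge of its Newton
polygon with primitive normal vector `β = (β₁, β₂)`: the linear form
`β₁ i + β₂ j` attains its minimum `m` over the support of `f` exactly at
lattice points of `ℓ`, and the lattice points of `ℓ ∩ ℤ²` are
`(i_r, j_r) = (i₀, j₀) + r (β₂, -β₁)` for `0 ≤ r ≤ l`, the two endpoints being
vertices of the Newton polygon (hence having nonzero coefficients).  Choose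
`δ₁, δ₂ ∈ ℤ` with `δ₁ β₂ - δ₂ β₁ = 1` and let `F ∈ k[X,Y]` with `Y ∤ F` and
`n_X, n_Y ∈ ℤ` be determined by
`f(X^{δ₁} Y^{β₁}, X^{δ₂} Y^{β₂}) = X^{n_X} Y^{n_Y} F(X, Y)`
(the substitution `x = X^{δ₁}Y^{β₁}`, `y = X^{δ₂}Y^{β₂}` sends the monomial
`xⁱyʲ` to `X^{δ₁ i + δ₂ j} Y^{β₁ i + β₂ j}`, i.e. it is `Finsupp.mapDomain`
along the corresponding linear map of exponents).  Then
`F(X, 0) = X^d ⬝ Σ_{r=0}^{l} c_{i_r j_r} X^r` for some `d ∈ ℕ`. -/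
theorem newton_edge_restriction
    (k : Type) [Field k] (f : (ℤ × ℤ) →₀ k) (hf : f ≠ 0)
    (β δ : ℤ × ℤ) (hβprim : Int.gcd β.1 β.2 = 1)
    (hδ : δ.1 * β.2 - δ.2 * β.1 = 1)
    (m : ℤ) (hmin : ∀ p ∈ f.support, m ≤ β.1 * p.1 + β.2 * p.2)
    (i₀ j₀ : ℤ) (l : ℕ)
    (hvertex₀ : f (i₀, j₀) ≠ 0)
    (hedge₀ : β.1 * i₀ + β.2 * j₀ = m)
    (hvertex₁ : f (i₀ + (l : ℤ) * β.2, j₀ - (l : ℤ) * β.1) ≠ 0)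
    (hedge : ∀ p ∈ f.support, β.1 * p.1 + β.2 * p.2 = m →
      ∃ r : ℕ, r ≤ l ∧ p = (i₀ + (r : ℤ) * β.2, j₀ - (r : ℤ) * β.1))
    (F : (ℤ × ℤ) →₀ k) (nX nY : ℤ)
    (hFpoly : ∀ p ∈ F.support, 0 ≤ p.1 ∧ 0 ≤ p.2)
    (hFY : ∃ p ∈ F.support, p.2 = 0)
    (heq : Finsupp.mapDomain
        (fun p : ℤ × ℤ => (δ.1 * p.1 + δ.2 * p.2, β.1 * p.1 + β.2 * p.2)) f =
      Finsupp.mapDomain (fun p : ℤ × ℤ => (p.1 + nX, p.2 + nY)) F) :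
    ∃ d : ℕ,
      (∀ r : ℕ, r ≤ l →
        F ((d : ℤ) + (r : ℤ), 0) = f (i₀ + (r : ℤ) * β.2, j₀ - (r : ℤ) * β.1)) ∧
      (∀ i : ℤ, F (i, 0) ≠ 0 → ∃ r : ℕ, r ≤ l ∧ i = (d : ℤ) + (r : ℤ)) := by
  subst hedge₀
  obtain ⟨d, hrow, hsupp⟩ := newton_edge_restriction_general (p₀ := (i₀, j₀)) (n := (nX, nY))
    hδ hvertex₀ hmin hedge hFpoly hFY heq
  exact ⟨d, fun r _ ↦ hrow r, hsupp⟩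
end

section
/- Let K be an infinite field and let L₁, …, L_m be finite separable field extensions of K. Then there exists a separable polynomial f ∈ K[y] such that the product K-algebra L₁ × ⋯ × L_m is isomorphic, as a K-algebra, to K[y]/(f). -/
open Polynomial

/-!
Write `Lᵢ = K[aᵢ]` by the primitive element theorem. Replacing `aᵢ` by a translate `aᵢ + c` with
`c ∈ K` keeps it a generator, and since a polynomial has finitely many roots while `K` is infinite,
these translates have infinitely many minimal polynomials. So the `aᵢ` can be chosen with pairwise
distinct, hence pairwise coprime, minimal polynomials `fᵢ`. Their product is separable, and by the
Chinese remainder theorem the quotient by it is `∏ᵢ K[y]/(fᵢ) ≅ ∏ᵢ Lᵢ`.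
-/

open Function

theorem exists_injective_forall_mem_of_infinite {ι α : Type*} [Finite ι] {s : ι → Set α}
    (hs : ∀ i, (s i).Infinite) : ∃ f : ι → α, Injective f ∧ ∀ i, f i ∈ s i := by
  classical
  have := Fintype.ofFinite ι
  -- Once each set is cut down to `Fintype.card ι` elements, Hall's theorem applies.
  choose t hts ht using fun i ↦ (hs i).exists_subset_card_eq (Fintype.card ι)
  have hall (u : Finset ι) : u.card ≤ (u.biUnion t).card := by
    obtain rfl | ⟨i, hi⟩ := u.eq_empty_or_nonempty
    · simp
    calc u.card ≤ Fintype.card ι := u.card_le_univ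
      _ = (t i).card := (ht i).symm
      _ ≤ (u.biUnion t).card := Finset.card_le_card (Finset.subset_biUnion_of_mem t hi)
  obtain ⟨f, hf, hft⟩ := (Finset.all_card_le_biUnion_card_iff_exists_injective t).mp hall
  exact ⟨f, hf, fun i ↦ hts i (hft i)⟩

theorem adjoin_singleton_add_algebraMap {R A : Type*} [CommRing R] [Ring A] [Algebra R A]
    (a : A) (c : R) : Algebra.adjoin R {a + algebraMap R A c} = Algebra.adjoin R {a} := by
  apply le_antisymm <;> apply Algebra.adjoin_singleton_le
  · exact add_mem (Algebra.self_mem_adjoin_singleton R a) (algebraMap_mem _ c)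
  · simpa using sub_mem (Algebra.self_mem_adjoin_singleton R (a + algebraMap R A c))
      (algebraMap_mem _ c)

theorem surjective_pi_of_pairwise_isCoprime_ker {R B ι : Type*} [CommSemiring R] [CommRing B]
    [Algebra R B] [Finite ι] {A : ι → Type*} [∀ i, Ring (A i)] [∀ i, Algebra R (A i)]
    {φ : ∀ i, B →ₐ[R] A i} (hφ : ∀ i, Surjective (φ i))
    (hker : Pairwise (IsCoprime on fun i ↦ RingHom.ker (φ i))) :
    Surjective (AlgHom.pi φ) := by
  intro x
  choose y hy using fun i ↦ hφ i (x i)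
  obtain ⟨b, hb⟩ := Ideal.exists_forall_sub_mem_ideal hker y
  refine ⟨b, funext fun i ↦ ?_⟩
  rw [AlgHom.pi_apply, ← hy i]
  exact (RingHom.sub_mem_ker_iff (φ i)).mp (hb i)

section Minpoly

theorem infinite_range_minpoly_add_algebraMap {R A : Type*} [CommRing R] [Infinite R] [CommRing A]
    [IsDomain A] [Algebra R A] [FaithfulSMul R A] [Algebra.IsIntegral R A] (a : A) :
    (Set.range fun c : R ↦ minpoly R (a + algebraMap R A c)).Infinite := by
  intro hfin
  have : IsDomain R := (FaithfulSMul.algebraMap_injective R A).isDomain (algebraMap R A)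
  have htranslates : (Set.range fun c : R ↦ a + algebraMap R A c).Infinite :=
    Set.infinite_range_of_injective
      ((add_right_injective a).comp (FaithfulSMul.algebraMap_injective R A))
  refine htranslates ((hfin.biUnion fun p _ ↦ p.rootSet_finite A).subset ?_)
  rintro _ ⟨c, rfl⟩
  refine Set.mem_biUnion ⟨c, rfl⟩ ?_
  exact (mem_rootSet_of_ne (minpoly.ne_zero (Algebra.IsIntegral.isIntegral _))).mpr
    (minpoly.aeval R _)

theorem exists_injective_minpoly_of_adjoin_singleton_eq_top {R ι : Type*} [CommRing R] [Infinite R]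
    [Finite ι] {A : ι → Type*} [∀ i, CommRing (A i)] [∀ i, IsDomain (A i)] [∀ i, Algebra R (A i)]
    [∀ i, FaithfulSMul R (A i)] [∀ i, Algebra.IsIntegral R (A i)]
    (h : ∀ i, ∃ a : A i, Algebra.adjoin R {a} = ⊤) :
    ∃ a : ∀ i, A i, (∀ i, Algebra.adjoin R {a i} = ⊤) ∧ Injective fun i ↦ minpoly R (a i) := by
  choose a ha using h
  obtain ⟨f, hf, hfa⟩ := exists_injective_forall_mem_of_infinite
    fun i ↦ infinite_range_minpoly_add_algebraMap (R := R) (a i)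
  choose c hc using hfa
  refine ⟨fun i ↦ a i + algebraMap R (A i) (c i), fun i ↦ ?_, ?_⟩
  · rw [adjoin_singleton_add_algebraMap, ha i]
  · simpa only [hc] using hf

variable {K : Type*} [Field K]

theorem isCoprime_minpoly_of_ne {A B : Type*} [Ring A] [IsDomain A] [Algebra K A] [Ring B]
    [IsDomain B] [Algebra K B] {a : A} {b : B} (ha : IsIntegral K a) (hb : IsIntegral K b)
    (hab : minpoly K a ≠ minpoly K b) : IsCoprime (minpoly K a) (minpoly K b) := by
  refine (minpoly.irreducible ha).coprime_iff_not_dvd.mpr fun hdvd ↦ hab ?_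
  exact eq_of_monic_of_associated (minpoly.monic ha) (minpoly.monic hb)
    ((minpoly.irreducible ha).associated_of_dvd (minpoly.irreducible hb) hdvd)

variable {ι : Type*} {A : ι → Type*} [∀ i, Ring (A i)] [∀ i, Algebra K (A i)]
  {a : ∀ i, A i}

theorem ker_pi_aeval_eq_span_prod_minpoly [Fintype ι]
    (hcop : Pairwise (IsCoprime on fun i ↦ minpoly K (a i))) :
    RingHom.ker (AlgHom.pi fun i ↦ aeval (R := K) (a i)) = Ideal.span {∏ i, minpoly K (a i)} :=
  calc RingHom.ker (AlgHom.pi fun i ↦ aeval (R := K) (a i))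
      = ⨅ i, RingHom.ker (aeval (R := K) (a i)) := by
        ext p
        simp only [RingHom.mem_ker, Ideal.mem_iInf, funext_iff, AlgHom.pi_apply, Pi.zero_apply]
    _ = ⨅ i, Ideal.span {minpoly K (a i)} := by simp only [minpoly.ker_aeval_eq_span_minpoly]
    _ = Ideal.span {∏ i, minpoly K (a i)} := Ideal.iInf_span_singleton hcop

theorem surjective_pi_aeval_of_pairwise_isCoprime_minpoly [Finite ι]
    (ha : ∀ i, Algebra.adjoin K {a i} = ⊤)
    (hcop : Pairwise (IsCoprime on fun i ↦ minpoly K (a i))) :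
    Surjective (AlgHom.pi fun i ↦ aeval (R := K) (a i)) := by
  refine surjective_pi_of_pairwise_isCoprime_ker (fun i ↦ ?_) fun i j hij ↦ ?_
  · rw [← AlgHom.range_eq_top, ← Algebra.adjoin_singleton_eq_range_aeval, ha i]
  · simpa only [onFun, minpoly.ker_aeval_eq_span_minpoly] using
      (Ideal.isCoprime_span_singleton_iff _ _).mpr (hcop hij)

/-- The Chinese remainder isomorphism for algebras `A i = K[a i]` whose generators have pairwise
coprime minimal polynomials; it sends the class of `p` to the family `p (a i)`. -/
noncomputable def quotientSpanProdMinpolyEquivPi [Fintype ι]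
    (ha : ∀ i, Algebra.adjoin K {a i} = ⊤)
    (hcop : Pairwise (IsCoprime on fun i ↦ minpoly K (a i))) :
    (K[X] ⧸ Ideal.span {∏ i, minpoly K (a i)}) ≃ₐ[K] ∀ i, A i :=
  (Ideal.quotientEquivAlgOfEq K (ker_pi_aeval_eq_span_prod_minpoly hcop).symm).trans
    (Ideal.quotientKerAlgEquivOfSurjective
      (surjective_pi_aeval_of_pairwise_isCoprime_minpoly ha hcop))

end Minpoly

theorem exists_adjoin_singleton_eq_top_of_isSeparable (K L : Type*) [Field K] [Field L]
    [Algebra K L] [FiniteDimensional K L] [Algebra.IsSeparable K L] :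
    ∃ a : L, Algebra.adjoin K {a} = ⊤ := by
  simpa only [IntermediateField.adjoin_eq_top_iff] using Field.exists_primitive_element K L

theorem prod_of_finite_separable_field_extensions_is_quotient_by_separable_general
    (K : Type*) [Field K] [Infinite K] {ι : Type*} [Finite ι] (L : ι → Type*)
    [∀ i, Field (L i)] [∀ i, Algebra K (L i)]
    [∀ i, FiniteDimensional K (L i)] [∀ i, Algebra.IsSeparable K (L i)] :
    ∃ f : K[X], f.Separable ∧
      Nonempty ((∀ i, L i) ≃ₐ[K] (K[X] ⧸ Ideal.span {f})) := by
  have := Fintype.ofFinite ι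
  obtain ⟨a, ha, hinj⟩ := exists_injective_minpoly_of_adjoin_singleton_eq_top
    fun i ↦ exists_adjoin_singleton_eq_top_of_isSeparable K (L i)
  have hcop : Pairwise (IsCoprime on fun i ↦ minpoly K (a i)) := fun i j hij ↦
    isCoprime_minpoly_of_ne (Algebra.IsIntegral.isIntegral _) (Algebra.IsIntegral.isIntegral _)
      (hinj.ne hij)
  have hsep : (∏ i, minpoly K (a i)).Separable :=
    separable_prod hcop fun i ↦ Algebra.IsSeparable.isSeparable K (a i)
  exact ⟨_, hsep, ⟨(quotientSpanProdMinpolyEquivPi ha hcop).symm⟩⟩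

/-- **Lemma A.1 (algebraic core)** of the paper.  Let `K` be an infinite field
and let `L₁, …, L_m` be finite separable field extensions of `K`.  Then there
exists a separable polynomial `f ∈ K[y]` such that the product `K`-algebra
`L₁ × ⋯ × L_m` is isomorphic, as a `K`-algebra, to `K[y]/(f)`. -/
theorem prod_of_finite_separable_field_extensions_is_quotient_by_separable
    (K : Type) [Field K] [Infinite K] (m : ℕ) (L : Fin m → Type)
    [∀ i, Field (L i)] [∀ i, Algebra K (L i)]
    [∀ i, FiniteDimensional K (L i)] [∀ i, Algebra.IsSeparable K (L i)] :
    ∃ f : K[X], f.Separable ∧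
      Nonempty ((∀ i, L i) ≃ₐ[K] (K[X] ⧸ Ideal.span {f})) :=
  prod_of_finite_separable_field_extensions_is_quotient_by_separable_general K L
end

section
/- Let k be a perfect field and let Z be a geometrically reduced, separated algebraic variety over k, pure of dimension n, where either n > 0 or k is infinite. Then there exists a polynomial g ∈ k[x₁,…,x_n,y] such that the affine hypersurface V : g = 0 in A_k^{n+1} is smooth over k and birational to Z; that is, there exist dense open subschemes U ⊆ Z and W ⊆ V which are isomorphic as k-schemes. -/
open AlgebraicGeometry CategoryTheory Polynomial TopologicalSpace

noncomputable section

namespace BakerModels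

/-- The ring of Laurent polynomials in two variables over `k`,
`k[x^{±1}, y^{±1}]`, realised as the monoid algebra of `ℤ × ℤ`. -/
abbrev LaurentPoly₂ (k : Type) [CommRing k] : Type := AddMonoidAlgebra k (ℤ × ℤ)

/-- A finitely supported coefficient function determines a Laurent polynomial. -/
def ofCoeffs {k : Type} [CommRing k] (f : (ℤ × ℤ) →₀ k) : LaurentPoly₂ k := AddMonoidAlgebra.ofCoeff f

/-- Base change of a Laurent polynomial along a ring homomorphism (applied to
the coefficients). -/
def mapLaurent {k K : Type} [CommRing k] [CommRing K] (φ : k →+* K)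
    (f : LaurentPoly₂ k) : LaurentPoly₂ K :=
  ofCoeffs (Finsupp.mapRange φ φ.map_zero f.coeff)

/-- `Spec k`, the base scheme of a field (or commutative ring) `k`. -/
abbrev SpecOf (k : Type) [CommRing k] : Scheme := Spec (CommRingCat.of k)

/-- The affine curve `C₀ : f = 0` in the two–dimensional torus
`𝔾ₘ² = Spec k[x^{±1}, y^{±1}]`. -/
def torusCurve (k : Type) [CommRing k] (f : LaurentPoly₂ k) : Scheme :=
  Spec (CommRingCat.of (LaurentPoly₂ k ⧸ Ideal.span {f}))

/-- The structure morphism of `torusCurve k f` over `Spec k`. -/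
def torusCurveOver (k : Type) [CommRing k] (f : LaurentPoly₂ k) :
    torusCurve k f ⟶ SpecOf k :=
  Spec.map (CommRingCat.ofHom (algebraMap k (LaurentPoly₂ k ⧸ Ideal.span {f})))

/-- A (Noetherian) local ring is *regular* if its maximal ideal can be generated
by `dim R` many elements. -/
def IsRegularLocalRing (R : Type) [CommRing R] [IsLocalRing R] : Prop :=
  IsNoetherianRing R ∧
    ∃ s : Finset R, Ideal.span (s : Set R) = IsLocalRing.maximalIdeal R ∧
      (s.card : WithBot (WithTop ℕ)) = ringKrullDim R

/-- A scheme is *regular at a point* if its stalk there is a regular local ring.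
(Over a perfect base field this is the same as smoothness at the point.) -/
def RegularAt (X : Scheme) (x : X) : Prop :=
  IsRegularLocalRing (X.presheaf.stalk x)

/-- The regular locus `Reg X` of a scheme. -/
def regularLocus (X : Scheme) : Set X := {x | RegularAt X x}

/-- The singular locus `Sing X` of a scheme. -/
def singularLocus (X : Scheme) : Set X := {x | ¬ RegularAt X x}

/-- A scheme is regular if it is regular at all of its points. -/
def RegularScheme (X : Scheme) : Prop := ∀ x, RegularAt X x

/-- A morphism of schemes is *birational* if it restricts to an isomorphism
over a dense open of the target. -/
def IsBirationalHom {X Y : Scheme} (f : X ⟶ Y) : Prop :=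
  ∃ V : Y.Opens, Dense (V : Set Y) ∧ IsIso (f ∣_ V)

/-- Two schemes over a common base are *birational over the base* if they
contain isomorphic dense open subschemes (the isomorphism commuting with the
structure morphisms). -/
def AreBirationalOver {S X Y : Scheme} (φX : X ⟶ S) (φY : Y ⟶ S) : Prop :=
  ∃ (U : X.Opens) (V : Y.Opens) (e : U.toScheme ≅ V.toScheme),
    Dense (U : Set X) ∧ Dense (V : Set Y) ∧ e.hom ≫ V.ι ≫ φY = U.ι ≫ φX

/-- A *curve* is an (equidimensional) scheme all of whose irreducible
components are one-dimensional. -/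
def IsCurve (X : Scheme) : Prop :=
  ∀ T ∈ irreducibleComponents (X : Type), topologicalKrullDim T = 1

/-- A projective curve over a field `k` (a proper curve over `Spec k`). -/
structure ProjCurve (k : Type) [Field k] where
  X : Scheme
  structMap : X ⟶ SpecOf k
  isCurve : IsCurve X
  proper : IsProper structMap

/-- A smooth projective curve over a field `k`. -/
structure SmoothProjCurve (k : Type) [Field k] extends ProjCurve k where
  smooth : IsSmooth structMap

/-!
Affine `k`-schemes of finite type with the same total ring of fractions are birational, so it
suffices to produce `g` whose hypersurface has the total ring of fractions of `Z`: the product of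
the function fields `K i` of the irreducible components. Since `k` is perfect, each `K i` is a
finite separable extension of `F = k(x₁, …, xₙ)`. As `F` is infinite, primitive elements of the
`K i` can be chosen with pairwise distinct minimal polynomials, none of them equal to `y`, so that
`∏ i, K i ≃ F[y] / (P)` with `P` separable and `P(0) ≠ 0`.

It remains to spread `P` out over `R = k[x₁, …, xₙ]` without losing separability. Clear the
denominators of `P`, let `a` be its constant coefficient, and let `r ∈ R` be a nonzero combination
of `P` and `P'`. Then `g(y) = P(r a² y) / a` has coefficients in `R` and is congruent to `1` modulo
`r a`. Hence `r` and `a` are units modulo `g`, and so is `g'` by the relation between `P`, `P'` and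
`r`: the hypersurface `g = 0` is étale over `𝔸ⁿ`.
-/

open Scheme (BirationalOver)
open scoped nonZeroDivisors Function

universe u

/-! ### Separable polynomials and étale algebras -/

theorem isUnit_aeval_derivative_of_isNilpotent {R S : Type*} [CommRing R] [CommRing S] [Algebra R S]
    {g : R[X]} (hg : g.Separable) {x : S} (hx : IsNilpotent (aeval x g)) :
    IsUnit (aeval x (derivative g)) := by
  obtain ⟨u, v, huv⟩ := hg
  have h : aeval x u * aeval x g + aeval x v * aeval x (derivative g) = 1 := by
    simpa using congrArg (aeval x) huv
  refine isUnit_of_mul_isUnit_right (x := aeval x v) ?_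
  rw [← eq_sub_iff_add_eq'] at h
  exact h ▸ ((Commute.all _ _).isNilpotent_mul_left hx).isUnit_one_sub

theorem eq_of_aeval_eq_zero_of_isNilpotent_sub {R S : Type*} [CommRing R] [CommRing S] [Algebra R S]
    {g : R[X]} (hg : g.Separable) {x y : S} (hx : aeval x g = 0) (hy : aeval y g = 0)
    (hxy : IsNilpotent (x - y)) : x = y := by
  have hx' : IsNilpotent (aeval x g) := hx ▸ IsNilpotent.zero
  exact (existsUnique_nilpotent_sub_and_aeval_eq_zero hx'
    (isUnit_aeval_derivative_of_isNilpotent hg hx')).unique ⟨by simp, hx⟩ ⟨hxy, hy⟩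

theorem etale_adjoinRoot {R : Type*} [CommRing R] {g : R[X]} (hg : g.Separable) :
    Algebra.Etale R (AdjoinRoot g) where
  formallyEtale := by
    rw [Algebra.FormallyEtale.iff_comp_bijective]
    intro S _ _ I hI
    have isNilpotent_of_mem {a : S} (ha : a ∈ I) : IsNilpotent a :=
      ⟨2, by simpa [hI] using Ideal.pow_mem_pow ha 2⟩
    refine ⟨fun f₁ f₂ h ↦ ?_, fun f ↦ ?_⟩
    · refine AdjoinRoot.algHom_ext (eq_of_aeval_eq_zero_of_isNilpotent_sub hg
        (AdjoinRoot.aeval_algHom_eq_zero g f₁) (AdjoinRoot.aeval_algHom_eq_zero g f₂) ?_)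
      exact isNilpotent_of_mem (Ideal.Quotient.eq.mp (DFunLike.congr_fun h (AdjoinRoot.root g)))
    · obtain ⟨x, hx⟩ := Ideal.Quotient.mkₐ_surjective R I (f (AdjoinRoot.root g))
      have hxg : IsNilpotent (aeval x g) := isNilpotent_of_mem <| by
        rw [← Ideal.Quotient.eq_zero_iff_mem, ← Ideal.Quotient.mkₐ_eq_mk R, ← aeval_algHom_apply,
          hx, AdjoinRoot.aeval_algHom_eq_zero]
      obtain ⟨y, ⟨hxy, hy⟩, -⟩ := existsUnique_nilpotent_sub_and_aeval_eq_zero hxg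
        (isUnit_aeval_derivative_of_isNilpotent hg hxg)
      have hy' : g.eval₂ (Algebra.ofId R S : R →+* S) y = 0 := by simpa [aeval_def] using! hy
      refine ⟨AdjoinRoot.liftAlgHom g (Algebra.ofId R S) y hy', AdjoinRoot.algHom_ext ?_⟩
      refine eq_of_aeval_eq_zero_of_isNilpotent_sub hg
        (AdjoinRoot.aeval_algHom_eq_zero g _) (AdjoinRoot.aeval_algHom_eq_zero g _) ?_
      rw [← hx, AlgHom.comp_apply, AdjoinRoot.liftAlgHom_root, ← map_sub, ← neg_sub]
      exact hxy.neg.map _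
  finitePresentation :=
    Algebra.FinitePresentation.quotient (A := R[X]) (Submodule.fg_span (by simp))

theorem nonempty_quotient_finSuccEquiv_symm_algEquiv {R : Type*} [CommRing R] {n : ℕ}
    (g : (MvPolynomial (Fin n) R)[X]) :
    Nonempty (AdjoinRoot g ≃ₐ[R] MvPolynomial (Fin (n + 1)) R ⧸
      Ideal.span {(MvPolynomial.finSuccEquiv R n).symm g}) :=
  ⟨Ideal.quotientEquivAlg (Ideal.span {g}) _ (MvPolynomial.finSuccEquiv R n).symm
    (by rw [Ideal.map_span, Set.image_singleton]; rfl)⟩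

theorem smooth_adjoinRoot {k R : Type*} [CommRing k] [CommRing R] [Algebra k R]
    [Algebra.Smooth k R] {g : R[X]} (hg : g.Separable) : Algebra.Smooth k (AdjoinRoot g) :=
  have := etale_adjoinRoot hg
  .comp k R (AdjoinRoot g)

/-! ### Finite products of separable field extensions -/

open IntermediateField in
theorem exists_primitive_element_isCoprime_minpoly (F E : Type*) [Field F] [Infinite F] [Field E]
    [Algebra F E] [FiniteDimensional F E] [Algebra.IsSeparable F E] {q : F[X]} (hq : q ≠ 0) :
    ∃ β : E, F⟮β⟯ = ⊤ ∧ IsCoprime (minpoly F β) q := by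
  obtain ⟨α, hα⟩ := Field.exists_primitive_element F E
  obtain ⟨c, hc⟩ : ∃ c : F, aeval (α + algebraMap F E c) q ≠ 0 := by
    by_contra! h
    have hinj : Function.Injective fun c : F ↦ α + algebraMap F E c :=
      (add_right_injective α).comp (algebraMap F E).injective
    exact Set.infinite_of_injective_forall_mem hinj
      (fun c ↦ (mem_rootSet_of_ne hq).mpr (h c)) (q.rootSet_finite E)
  refine ⟨α + algebraMap F E c, ?_, ?_⟩
  · rw [eq_top_iff, ← hα, adjoin_simple_le_iff]
    simpa using sub_mem (mem_adjoin_simple_self F (α + algebraMap F E c))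
      (IntermediateField.algebraMap_mem F⟮α + algebraMap F E c⟯ c)
  · refine ((minpoly.irreducible (.of_finite F _)).coprime_iff_not_dvd).mpr fun h ↦ hc ?_
    exact (minpoly.dvd_iff).mp h

open IntermediateField in
theorem exists_primitive_elements_pairwise_isCoprime_minpoly {F ι : Type*} [Field F] [Infinite F]
    (K : ι → Type*) [∀ i, Field (K i)] [∀ i, Algebra F (K i)] [∀ i, FiniteDimensional F (K i)]
    [∀ i, Algebra.IsSeparable F (K i)] {q : F[X]} (hq : q ≠ 0) (s : Finset ι) :
    ∃ β : ∀ i, K i, (∀ i ∈ s, F⟮β i⟯ = ⊤ ∧ IsCoprime (minpoly F (β i)) q) ∧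
      (s : Set ι).Pairwise fun i j ↦ IsCoprime (minpoly F (β i)) (minpoly F (β j)) := by
  classical
  induction s using Finset.induction_on with
  | empty => exact ⟨0, by simp, by simp⟩
  | insert a s ha ih =>
    obtain ⟨β, hβq, hβ⟩ := ih
    have hprod : ∏ i ∈ s, minpoly F (β i) ≠ 0 :=
      Finset.prod_ne_zero_iff.mpr fun i _ ↦ minpoly.ne_zero (.of_finite F (β i))
    obtain ⟨γ, hγ, hγq⟩ := exists_primitive_element_isCoprime_minpoly F (K a) (mul_ne_zero hq hprod)
    have hγβ (i) (hi : i ∈ s) : IsCoprime (minpoly F γ) (minpoly F (β i)) :=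
      IsCoprime.prod_right_iff.mp hγq.of_mul_right_right i hi
    have update_of_mem (i) (hi : i ∈ s) : Function.update β a γ i = β i :=
      Function.update_of_ne (ne_of_mem_of_not_mem hi ha) _ _
    refine ⟨Function.update β a γ, Finset.forall_mem_insert _ _ _ |>.mpr ⟨?_, fun i hi ↦ ?_⟩, ?_⟩
    · simpa only [Function.update_self] using ⟨hγ, hγq.of_mul_right_left⟩
    · simpa only [update_of_mem i hi] using hβq i hi
    · rw [Finset.coe_insert, Set.pairwise_insert_of_notMem (by simpa using ha)]
      refine ⟨fun i hi j hj hij ↦ ?_, fun i hi ↦ ?_⟩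
      · simpa only [update_of_mem i hi, update_of_mem j hj] using hβ hi hj hij
      · simpa only [update_of_mem i hi, Function.update_self] using ⟨hγβ i hi, (hγβ i hi).symm⟩

open IntermediateField in
theorem nonempty_adjoinRoot_prod_minpoly_algEquiv_pi {F ι : Type*} [Field F] [Fintype ι]
    {K : ι → Type*} [∀ i, Field (K i)] [∀ i, Algebra F (K i)] [∀ i, FiniteDimensional F (K i)]
    {β : ∀ i, K i} (hβ : ∀ i, F⟮β i⟯ = ⊤)
    (hcop : Pairwise fun i j ↦ IsCoprime (minpoly F (β i)) (minpoly F (β j))) :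
    Nonempty (AdjoinRoot (∏ i, minpoly F (β i)) ≃ₐ[F] ∀ i, K i) := by
  have aeval_apply (p : F[X]) (i : ι) : aeval β p i = aeval (β i) p :=
    (aeval_algHom_apply (Pi.evalAlgHom F K i) β p).symm
  have hmonic : (∏ i, minpoly F (β i)).Monic :=
    monic_prod_of_monic _ _ fun i _ ↦ minpoly.monic (.of_finite F (β i))
  have hroot : aeval β (∏ i, minpoly F (β i)) = 0 := by
    ext i
    rw [aeval_apply, map_prod]
    exact Finset.prod_eq_zero (Finset.mem_univ i) (minpoly.aeval F (β i))
  let θ : AdjoinRoot (∏ i, minpoly F (β i)) →ₐ[F] ∀ i, K i :=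
    AdjoinRoot.liftAlgHom _ (Algebra.ofId F _) β hroot
  have hinj : Function.Injective θ := by
    refine (injective_iff_map_eq_zero θ).mpr fun x hx ↦ ?_
    obtain ⟨p, rfl⟩ := AdjoinRoot.mk_surjective x
    refine AdjoinRoot.mk_eq_zero.mpr (Fintype.prod_dvd_of_isRelPrime ?_ fun i ↦ ?_)
    · exact fun i j hij ↦ (hcop hij).isRelPrime
    · rw [minpoly.dvd_iff, ← aeval_apply]
      exact congrFun hx i
  have hfinrank : Module.finrank F (AdjoinRoot (∏ i, minpoly F (β i))) =
      Module.finrank F (∀ i, K i) := by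
    rw [Module.finrank_pi_fintype, (AdjoinRoot.powerBasis' hmonic).finrank,
      AdjoinRoot.powerBasis'_dim, natDegree_prod_of_monic]
    · exact Finset.sum_congr rfl fun i _ ↦
        (Field.primitive_element_iff_minpoly_natDegree_eq F (β i)).mp (hβ i)
    · exact fun i _ ↦ minpoly.monic (.of_finite F (β i))
  have := hmonic.finite_adjoinRoot
  exact ⟨.ofBijective θ ⟨hinj, (LinearMap.injective_iff_surjective_of_finrank_eq_finrank
    (f := θ.toLinearMap) hfinrank).mp hinj⟩⟩

theorem exists_separable_adjoinRoot_algEquiv_pi {F ι : Type*} [Field F] [Infinite F] [Finite ι]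
    (K : ι → Type*) [∀ i, Field (K i)] [∀ i, Algebra F (K i)] [∀ i, FiniteDimensional F (K i)]
    [∀ i, Algebra.IsSeparable F (K i)] {q : F[X]} (hq : q ≠ 0) :
    ∃ P : F[X], P.Separable ∧ IsCoprime P q ∧ Nonempty (AdjoinRoot P ≃ₐ[F] ∀ i, K i) := by
  have := Fintype.ofFinite ι
  obtain ⟨β, hβ, hcop⟩ :=
    exists_primitive_elements_pairwise_isCoprime_minpoly K hq (Finset.univ : Finset ι)
  rw [Finset.coe_univ, Set.pairwise_univ] at hcop
  refine ⟨∏ i, minpoly F (β i), ?_, ?_,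
    nonempty_adjoinRoot_prod_minpoly_algEquiv_pi (fun i ↦ (hβ i (by simp)).1) hcop⟩
  · exact separable_prod hcop fun i ↦ Algebra.IsSeparable.isSeparable F (β i)
  · exact IsCoprime.prod_left fun i hi ↦ (hβ i hi).2

/-! ### Separable polynomials over a fraction field -/

theorem exists_map_eq_C_mul {R F : Type*} [CommRing R] [IsDomain R] [Field F] [Algebra R F]
    [IsFractionRing R F] (p : F[X]) :
    ∃ (q : R[X]) (s : R), s ≠ 0 ∧ q.map (algebraMap R F) = C (algebraMap R F s) * p := by
  obtain ⟨s, hs, hsp⟩ := IsLocalization.integerNormalization_spec (nonZeroDivisors R) p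
  exact ⟨_, s, nonZeroDivisors.ne_zero hs, by rw [hsp, ← smul_eq_C_mul, algebraMap_smul]⟩

theorem exists_bezout_eq_C {R F : Type*} [CommRing R] [IsDomain R] [Field F] [Algebra R F]
    [IsFractionRing R F] {p q : R[X]}
    (h : IsCoprime (p.map (algebraMap R F)) (q.map (algebraMap R F))) :
    ∃ (u v : R[X]) (r : R), r ≠ 0 ∧ u * p + v * q = C r := by
  obtain ⟨a, b, hab⟩ := h
  obtain ⟨u, s, hs, hu⟩ := exists_map_eq_C_mul (R := R) a
  obtain ⟨v, t, ht, hv⟩ := exists_map_eq_C_mul (R := R) b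
  refine ⟨C t * u, C s * v, s * t, mul_ne_zero hs ht,
    map_injective _ (IsFractionRing.injective R F) ?_⟩
  simp only [Polynomial.map_add, Polynomial.map_mul, map_C, hu, hv, map_mul]
  linear_combination (C (algebraMap R F s) * C (algebraMap R F t)) * hab

section Rescaling

variable {R : Type*} [CommRing R]

/-- The polynomial `p(h a x) / a`, where `a = p(0)`, which has coefficients in the base ring and
constant coefficient `1`. It is written without division: if `p = a + x p₁(x)`, it is
`1 + h x p₁(h a x)`. -/
def rescale (p : R[X]) (h : R) : R[X] :=
  1 + C h * (X * p.divX.comp (C (h * p.coeff 0) * X))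

theorem C_coeff_zero_mul_rescale (p : R[X]) (h : R) :
    C (p.coeff 0) * rescale p h = p.comp (C (h * p.coeff 0) * X) := by
  have hp := congrArg (fun q ↦ q.comp (C (h * p.coeff 0) * X)) (divX_mul_X_add p)
  simp only [add_comp, mul_comp, X_comp, C_comp, C_mul] at hp
  rw [rescale, C_mul, ← hp]
  ring

theorem coeff_zero_rescale (p : R[X]) (h : R) : (rescale p h).coeff 0 = 1 := by
  simp [rescale]

theorem isCoprime_rescale_C (p : R[X]) (h : R) : IsCoprime (rescale p h) (C h) :=
  ⟨1, -(X * p.divX.comp (C (h * p.coeff 0) * X)), by rw [rescale]; ring⟩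

theorem derivative_rescale [IsDomain R] {p : R[X]} (hp : p.coeff 0 ≠ 0) (h : R) :
    derivative (rescale p h) = C h * (derivative p).comp (C (h * p.coeff 0) * X) := by
  refine mul_left_cancel₀ (C_ne_zero.mpr hp) ?_
  rw [← derivative_C_mul, C_coeff_zero_mul_rescale, derivative_comp, derivative_C_mul,
    derivative_X, C_mul]
  ring

/- Modulo `g = rescale p h`, both `h` and its divisor `r` are units, and Bézout's identity
`u p + v p' = r`, evaluated at `h a x`, reads `v g' ≡ h r`. -/
theorem separable_rescale [IsDomain R] {p u v : R[X]} {r : R} (hp : p.coeff 0 ≠ 0)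
    (huv : u * p + v * derivative p = C r) : (rescale p (r * p.coeff 0)).Separable := by
  set a := p.coeff 0 with ha
  set h := r * a with hh
  have hgh : IsCoprime (rescale p h) (C h) := isCoprime_rescale_C p h
  have hgr : IsCoprime (rescale p h) (C r) :=
    hgh.of_isCoprime_of_dvd_right ⟨C a, by rw [hh, C_mul]⟩
  have key : C h * C r = v.comp (C (h * a) * X) * derivative (rescale p h) +
      (C h * u.comp (C (h * a) * X) * C a) * rescale p h := by
    have huv' := congrArg (fun w ↦ w.comp (C (h * a) * X)) huv
    simp only [add_comp, mul_comp, C_comp] at huv'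
    rw [← huv', derivative_rescale hp, ← C_coeff_zero_mul_rescale, ← ha]
    ring
  have hcop := hgh.mul_right hgr
  rw [key] at hcop
  exact hcop.of_add_mul_right_right.of_mul_right_right

end Rescaling

theorem exists_separable_coeff_zero_eq_one {R F : Type*} [CommRing R] [IsDomain R] [Field F]
    [Algebra R F] [IsFractionRing R F] {P : F[X]} (hP : P.Separable) (h0 : P.coeff 0 ≠ 0) :
    ∃ (g : R[X]) (c : F), c ≠ 0 ∧ g.Separable ∧ g.coeff 0 = 1 ∧
      C (P.coeff 0) * g.map (algebraMap R F) = P.comp (C c * X) := by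
  have hinj : Function.Injective (algebraMap R F) := IsFractionRing.injective R F
  obtain ⟨p, s, hs, hp⟩ := exists_map_eq_C_mul (R := R) P
  have hs' : algebraMap R F s ≠ 0 := (map_ne_zero_iff _ hinj).mpr hs
  have hpsep : (p.map (algebraMap R F)).Separable :=
    hp ▸ hP.unit_mul (isUnit_C.mpr hs'.isUnit)
  have hp0 : algebraMap R F (p.coeff 0) = algebraMap R F s * P.coeff 0 := by
    rw [← coeff_map, hp, coeff_C_mul]
  have ha : algebraMap R F (p.coeff 0) ≠ 0 := hp0 ▸ mul_ne_zero hs' h0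
  have ha' : p.coeff 0 ≠ 0 := ne_zero_of_map ha
  obtain ⟨u, v, r, hr, huv⟩ := exists_bezout_eq_C (R := R) (F := F) (p := p) (q := derivative p)
    (by rwa [← derivative_map])
  set h := r * p.coeff 0
  refine ⟨rescale p h, algebraMap R F (h * p.coeff 0), ?_, separable_rescale ha' huv,
    coeff_zero_rescale p h, ?_⟩
  · exact (map_ne_zero_iff _ hinj).mpr (mul_ne_zero (mul_ne_zero hr ha') ha')
  · refine mul_left_cancel₀ (C_ne_zero.mpr hs') ?_
    have := congrArg (map (algebraMap R F)) (C_coeff_zero_mul_rescale p h)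
    rw [Polynomial.map_mul, map_C, Polynomial.map_comp, hp, hp0] at this
    simpa [mul_assoc] using this

theorem nonempty_adjoinRoot_algEquiv_of_comp_eq {F : Type*} [Field F] {p q : F[X]} {c d : F}
    (hc : c ≠ 0) (hd : d ≠ 0) (h : C d * q = p.comp (C c * X)) :
    Nonempty (AdjoinRoot p ≃ₐ[F] AdjoinRoot q) := by
  let := invertibleOfNonzero hc
  have hp : algEquivCMulXAddC c 0 p = C d * q := by
    rw [h, algEquivCMulXAddC_apply, C_0, add_zero, comp_eq_aeval]
  refine ⟨Ideal.quotientEquivAlg (Ideal.span {p}) (Ideal.span {q}) (algEquivCMulXAddC c 0) ?_⟩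
  rw [Ideal.map_span, Set.image_singleton]
  change _ = Ideal.span {algEquivCMulXAddC c 0 p}
  rw [hp, Ideal.span_singleton_mul_left_unit (isUnit_C.mpr hd.isUnit)]

theorem C_dvd_of_C_dvd_mul {R : Type*} [CommRing R] {g p : R[X]} (hg : g.coeff 0 = 1) {b : R}
    (h : C b ∣ g * p) : C b ∣ p := by
  have C_dvd_iff (q : R[X]) : C b ∣ q ↔ q.map (Ideal.Quotient.mk (Ideal.span {b})) = 0 := by
    simp [C_dvd_iff_dvd_coeff, Polynomial.ext_iff, Ideal.Quotient.eq_zero_iff_dvd]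
  have hg' : g.map (Ideal.Quotient.mk (Ideal.span {b})) ∈ (R ⧸ Ideal.span {b})[X]⁰ :=
    mem_nonzeroDivisors_of_coeff_mem 0 (by simp [hg])
  rw [C_dvd_iff, Polynomial.map_mul] at h
  exact (C_dvd_iff p).mpr ((mul_left_mem_nonZeroDivisors_eq_zero_iff hg').mp h)

theorem adjoinRoot_of_mem_nonZeroDivisors {R : Type*} [CommRing R] {g : R[X]}
    (hg : g.coeff 0 = 1) {b : R} (hb : b ∈ R⁰) : AdjoinRoot.of g b ∈ (AdjoinRoot g)⁰ := by
  refine mem_nonZeroDivisors_iff_right.mpr fun x hx ↦ ?_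
  obtain ⟨p, rfl⟩ := AdjoinRoot.mk_surjective x
  rw [← AdjoinRoot.mk_C, ← map_mul, AdjoinRoot.mk_eq_zero] at hx
  obtain ⟨w, hw⟩ := hx
  obtain ⟨v, rfl⟩ := C_dvd_of_C_dvd_mul hg (b := b) (p := w) (hw ▸ Dvd.intro_left p rfl)
  have hbC : C b ∈ R[X]⁰ := mem_nonzeroDivisors_of_coeff_mem 0 (by simpa using hb)
  refine AdjoinRoot.mk_eq_zero.mpr ⟨v, (mul_cancel_right_mem_nonZeroDivisors hbC).mp ?_⟩
  rw [hw]
  ring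

theorem isFractionRing_of_isLocalization_of_isArtinianRing {A Q : Type*} [CommRing A]
    [CommRing Q] [Algebra A Q] [IsArtinianRing Q] {M : Submonoid A} [IsLocalization M Q]
    (hM : M ≤ A⁰) : IsFractionRing A Q :=
  IsLocalization.of_le M A⁰ hM fun a ha ↦ IsArtinianRing.isUnit_of_mem_nonZeroDivisors <|
    IsLocalization.map_nonZeroDivisors_le M Q ⟨a, ha, rfl⟩

attribute [local instance] Polynomial.algebra in
theorem exists_isFractionRing_adjoinRoot {R F Q : Type*} [CommRing R] [CommRing F]
    [Algebra R F] [IsFractionRing R F] [CommRing Q] [IsArtinianRing Q] [Algebra R Q] [Algebra F Q]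
    [IsScalarTower R F Q] {g : R[X]} (hg : g.coeff 0 = 1)
    (e : AdjoinRoot (g.map (algebraMap R F)) ≃ₐ[F] Q) :
    ∃ _ : Algebra (AdjoinRoot g) Q, IsScalarTower R (AdjoinRoot g) Q ∧
      IsFractionRing (AdjoinRoot g) Q := by
  let f : AdjoinRoot g →ₐ[R] Q := (e.toAlgHom.restrictScalars R).comp
    (AdjoinRoot.mapAlgHom (Algebra.ofId R F) g _ dvd_rfl)
  let := f.toAlgebra
  have : IsLocalization (R⁰.map C) F[X] := Polynomial.isLocalization R⁰ F
  have : IsLocalization ((R⁰.map C).map (AdjoinRoot.mk g)) Q := by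
    refine IsLocalization.of_surjective (S := F[X]) _ (AdjoinRoot.mk g) AdjoinRoot.mk_surjective
      ((e.toAlgHom : _ →+* Q).comp (AdjoinRoot.mk (g.map (algebraMap R F))))
      (e.surjective.comp AdjoinRoot.mk_surjective) ?_ ?_
    · have f_of (r : R) : f (AdjoinRoot.of g r) = e (AdjoinRoot.of _ (algebraMap R F r)) :=
        congrArg e (AdjoinRoot.map_of (algebraMap R F) g _ dvd_rfl r)
      have f_root : f (AdjoinRoot.root g) = e (AdjoinRoot.root _) :=
        congrArg e (AdjoinRoot.map_root (algebraMap R F) g _ dvd_rfl)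
      ext <;> simp [RingHom.algebraMap_toAlgebra, f_of, f_root]
    · intro p hp
      have hp : g.map (algebraMap R F) ∣ p :=
        AdjoinRoot.mk_eq_zero.mp (e.injective (by simpa using hp))
      exact Ideal.mem_of_dvd _ hp (Ideal.mem_map_of_mem _ (by simp))
  refine ⟨f.toAlgebra, .of_algHom f,
    isFractionRing_of_isLocalization_of_isArtinianRing (M := (R⁰.map C).map (AdjoinRoot.mk g)) ?_⟩
  rintro _ ⟨_, ⟨b, hb, rfl⟩, rfl⟩
  exact adjoinRoot_of_mem_nonZeroDivisors hg hb

/-! ### Function fields over a perfect field -/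

theorem ringKrullDim_eq_of_isIntegral {R S : Type*} [CommRing R] [CommRing S] [Algebra R S]
    [Algebra.IsIntegral R S] [FaithfulSMul R S] : ringKrullDim S = ringKrullDim R := by
  refine le_antisymm (Order.krullDim_le_of_strictMono (PrimeSpectrum.comap (algebraMap R S))
    fun p q hpq ↦ Ideal.IsIntegral.comap_lt_comap (R := R) hpq) (iSup_le fun l ↦ ?_)
  obtain ⟨Q, -, hQ, hQl⟩ := Ideal.exists_ideal_over_prime_of_isIntegral l.head.asIdeal (⊥ : Ideal S)
    (by simp [← RingHom.ker_eq_comap_bot, (RingHom.injective_iff_ker_eq_bot _).mp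
      (FaithfulSMul.algebraMap_injective R S)])
  have : Q.LiesOver l.head.asIdeal := ⟨hQl.symm⟩
  obtain ⟨L, hL, -⟩ := Ideal.exists_ltSeries_of_hasGoingUp (S := S) l Q
  exact hL ▸ Order.LTSeries.length_le_krullDim L

theorem trdeg_eq_of_ringKrullDim_eq_of_isAlgebraic {k R K : Type*} [Field k] [CommRing R]
    [IsDomain R] [Algebra k R] [Algebra.FiniteType k R] [CommRing K] [IsDomain K] [Algebra k K]
    [Algebra R K] [IsScalarTower k R K] [FaithfulSMul R K] [Algebra.IsAlgebraic R K] {n : ℕ}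
    (hn : ringKrullDim R = n) : Algebra.trdeg k K = n := by
  obtain ⟨s, g, hg, hgfin⟩ := exists_finite_inj_algHom_of_fg k R
  algebraize [g.toRingHom, (algebraMap R K).comp g.toRingHom]
  have : Algebra.IsIntegral (MvPolynomial (Fin s) k) R := ⟨hgfin.to_isIntegral⟩
  have : FaithfulSMul (MvPolynomial (Fin s) k) R :=
    (faithfulSMul_iff_algebraMap_injective _ _).mpr hg
  have : FaithfulSMul (MvPolynomial (Fin s) k) K := .trans _ R K
  have : IsScalarTower k (MvPolynomial (Fin s) k) K := .to₁₂₄ k (MvPolynomial (Fin s) k) R K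
  have : Algebra.IsAlgebraic (MvPolynomial (Fin s) k) K := .trans _ R K
  have hs : s = n := by
    rw [ringKrullDim_eq_of_isIntegral (R := MvPolynomial (Fin s) k),
      MvPolynomial.ringKrullDim_of_isNoetherianRing, ringKrullDim_eq_zero_of_field] at hn
    simpa using hn
  rw [← Cardinal.lift_inj, ← _root_.lift_trdeg_add_eq k (MvPolynomial (Fin s) k),
    MvPolynomial.trdeg_of_isDomain, trdeg_eq_zero]
  simp [hs]

theorem exists_algebra_fractionRing_isSeparable (k K : Type*) [Field k] [PerfectField k] [Field K]
    [Algebra k K] [Algebra.EssFiniteType k K] {n : ℕ} (hn : Algebra.trdeg k K = n) :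
    ∃ _ : Algebra (FractionRing (MvPolynomial (Fin n) k)) K,
      IsScalarTower k (FractionRing (MvPolynomial (Fin n) k)) K ∧
      FiniteDimensional (FractionRing (MvPolynomial (Fin n) k)) K ∧
      Algebra.IsSeparable (FractionRing (MvPolynomial (Fin n) k)) K := by
  obtain ⟨s, hs, hsep⟩ := exists_isTranscendenceBasis_and_isSeparable_of_perfectField k K
  have hcard : s.card = n := by simpa [hn] using hs.cardinalMk_eq_trdeg
  let e := (s.equivFinOfCardEq hcard).symm
  have hx : AlgebraicIndependent k (Subtype.val ∘ e) := hs.1.comp e e.injective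
  have hrange : Set.range (Subtype.val ∘ e) = (s : Set K) := by
    rw [e.surjective.range_comp, Subtype.range_coe]
  let L := IntermediateField.adjoin k (Set.range (Subtype.val ∘ e))
  have : Algebra.IsSeparable L K := by rwa [← hrange] at hsep
  have : Algebra.EssFiniteType L K := .of_comp k L K
  have : FiniteDimensional L K := Algebra.finite_of_essFiniteType_of_isAlgebraic
  let f : FractionRing (MvPolynomial (Fin n) k) →ₐ[k] K := L.val.comp hx.aevalEquivField.toAlgHom
  let := f.toAlgebra
  have hf : (algebraMap (FractionRing (MvPolynomial (Fin n) k)) K).comp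
      (hx.aevalEquivField.symm : L →+* FractionRing (MvPolynomial (Fin n) k)) =
      (RingEquiv.refl K : K →+* K).comp (algebraMap L K) :=
    RingHom.ext fun x ↦ congrArg Subtype.val (hx.aevalEquivField.apply_symm_apply x)
  refine ⟨f.toAlgebra, .of_algHom f, ?_, ?_⟩
  · exact Module.Finite.of_equiv_equiv hx.aevalEquivField.symm.toRingEquiv (.refl K) hf
  · exact Algebra.IsSeparable.of_equiv_equiv hx.aevalEquivField.symm.toRingEquiv (.refl K) hf

theorem exists_separable_isFractionRing_adjoinRoot_pi {R F ι : Type*} [CommRing R] [IsDomain R]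
    [Field F] [Infinite F] [Algebra R F] [IsFractionRing R F] [Finite ι] (K : ι → Type*)
    [∀ i, Field (K i)] [∀ i, Algebra R (K i)] [∀ i, Algebra F (K i)]
    [∀ i, IsScalarTower R F (K i)] [∀ i, FiniteDimensional F (K i)]
    [∀ i, Algebra.IsSeparable F (K i)] :
    ∃ (g : R[X]) (_ : Algebra (AdjoinRoot g) (∀ i, K i)), g.Separable ∧
      IsScalarTower R (AdjoinRoot g) (∀ i, K i) ∧ IsFractionRing (AdjoinRoot g) (∀ i, K i) := by
  obtain ⟨P, hP, hPX, ⟨e⟩⟩ := exists_separable_adjoinRoot_algEquiv_pi (F := F) K X_ne_zero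
  have h0 : P.coeff 0 ≠ 0 := fun h ↦
    not_isUnit_X (hPX.isUnit_of_dvd' (X_dvd_iff.mpr h) dvd_rfl)
  obtain ⟨g, c, hc, hg, hg0, hgP⟩ := exists_separable_coeff_zero_eq_one (R := R) hP h0
  obtain ⟨e'⟩ := nonempty_adjoinRoot_algEquiv_of_comp_eq hc h0 hgP
  have : IsArtinianRing (∀ i, K i) := .of_finite F _
  obtain ⟨_, hR, hQ⟩ := exists_isFractionRing_adjoinRoot hg0 (e'.symm.trans e)
  exact ⟨g, _, hg, hR, hQ⟩

theorem exists_separable_mvPolynomial_isFractionRing_adjoinRoot_pi {k ι : Type*} [Field k]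
    [PerfectField k] {n : ℕ} (hnk : 0 < n ∨ Infinite k) [Finite ι] (K : ι → Type*)
    [∀ i, Field (K i)] [∀ i, Algebra k (K i)] [∀ i, Algebra.EssFiniteType k (K i)]
    (hK : ∀ i, Algebra.trdeg k (K i) = n) :
    ∃ (g : (MvPolynomial (Fin n) k)[X]) (_ : Algebra (AdjoinRoot g) (∀ i, K i)), g.Separable ∧
      IsScalarTower k (AdjoinRoot g) (∀ i, K i) ∧ IsFractionRing (AdjoinRoot g) (∀ i, K i) := by
  let R := MvPolynomial (Fin n) k
  choose _ _ _ _ using fun i ↦ exists_algebra_fractionRing_isSeparable k (K i) (hK i)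
  let (i : ι) : Algebra R (K i) := .compHom (K i) (algebraMap R (FractionRing R))
  have (i : ι) : IsScalarTower R (FractionRing R) (K i) := .of_algebraMap_eq fun _ ↦ rfl
  have (i : ι) : IsScalarTower k R (K i) := .to₁₂₄ k R (FractionRing R) (K i)
  have : Infinite (FractionRing R) := by
    have : Infinite R := by
      rcases hnk with hn | hk
      · have : Nonempty (Fin n) := ⟨⟨0, hn⟩⟩
        infer_instance
      · exact .of_injective _ (MvPolynomial.C_injective (Fin n) k)
    exact .of_injective _ (IsFractionRing.injective R (FractionRing R))
  obtain ⟨g, _, hg, _, hQ⟩ :=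
    exists_separable_isFractionRing_adjoinRoot_pi (R := R) (F := FractionRing R) K
  exact ⟨g, _, hg, .to₁₃₄ k R (AdjoinRoot g) _, hQ⟩

/-! ### Birational affine schemes -/

/-- The structure morphism `Spec A ⟶ Spec k` of the spectrum of a `k`-algebra. -/
abbrev specOver (k A : Type u) [CommRing k] [CommRing A] [Algebra k A] :
    Spec (CommRingCat.of A) ⟶ Spec (CommRingCat.of k) :=
  Spec.map (CommRingCat.ofHom (algebraMap k A))

theorem smooth_specOver (k A : Type u) [CommRing k] [CommRing A] [Algebra k A]
    [Algebra.Smooth k A] : Smooth (specOver k A) :=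
  (HasRingHomProperty.Spec_iff (P := @Smooth)).mpr (RingHom.smooth_algebraMap.mpr ‹_›)

theorem birationalOver_specOver_of_algEquiv {k A B : Type u} [CommRing k] [CommRing A] [CommRing B]
    [Algebra k A] [Algebra k B] (e : A ≃ₐ[k] B) :
    BirationalOver (specOver k B) (specOver k A) := by
  have : IsIso (CommRingCat.ofHom (e : A →+* B)) := e.toRingEquiv.toCommRingCatIso.isIso_hom
  refine Scheme.Hom.birationalOver (Spec.map (CommRingCat.ofHom (e : A →+* B))) _ _ ?_
  rw [← Spec.map_comp, ← CommRingCat.ofHom_comp]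
  exact congrArg (Spec.map <| CommRingCat.ofHom ·) e.toAlgHom.comp_algebraMap

theorem isDominant_specMap_of_injective {A B : Type u} [CommRing A] [CommRing B] {f : A →+* B}
    (hf : Function.Injective f) : IsDominant (Spec.map (CommRingCat.ofHom f)) := by
  refine ⟨(PrimeSpectrum.denseRange_comap_iff_ker_le_nilRadical (f := f)).mpr ?_⟩
  rw [(RingHom.injective_iff_ker_eq_bot f).mp hf]
  exact bot_le

theorem birationalOver_specOver_of_isLocalization_away {k A B : Type u} [CommRing k] [CommRing A]
    [CommRing B] [Algebra k A] [Algebra k B] [Algebra A B] [IsScalarTower k A B] (a : A)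
    [IsLocalization.Away a B] [FaithfulSMul A B] :
    BirationalOver (specOver k B) (specOver k A) := by
  have := isDominant_specMap_of_injective (FaithfulSMul.algebraMap_injective A B)
  have : IsOpenImmersion (specOver A B) := .of_isLocalization a
  refine Scheme.Hom.birationalOver (specOver A B) _ _ ?_
  rw [← Spec.map_comp, ← CommRingCat.ofHom_comp, ← IsScalarTower.algebraMap_eq]

section Subalgebra

variable {k Q : Type*} [CommRing k] [CommRing Q] [Algebra k Q] {S : Subalgebra k Q} {s u : Q}

theorem exists_mul_pow_mem_of_mem_sup_adjoin (hs : s ∈ S) (hsu : s * u = 1) {q : Q}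
    (hq : q ∈ S ⊔ Algebra.adjoin k {u}) : ∃ N : ℕ, q * s ^ N ∈ S := by
  rw [← Algebra.adjoin_eq S, ← Algebra.adjoin_union] at hq
  induction hq using Algebra.adjoin_induction with
  | mem q hq =>
    rcases hq with hq | rfl
    · exact ⟨0, by simpa using hq⟩
    · exact ⟨1, by simp [mul_comm, hsu, one_mem]⟩
  | algebraMap r => exact ⟨0, by simp⟩
  | add q₁ q₂ _ _ h₁ h₂ =>
    obtain ⟨N, hN⟩ := h₁
    obtain ⟨M, hM⟩ := h₂
    refine ⟨N + M, ?_⟩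
    convert add_mem (mul_mem hN (pow_mem hs M)) (mul_mem hM (pow_mem hs N)) using 1
    ring
  | mul q₁ q₂ _ _ h₁ h₂ =>
    obtain ⟨N, hN⟩ := h₁
    obtain ⟨M, hM⟩ := h₂
    refine ⟨N + M, ?_⟩
    convert mul_mem hN hM using 1
    ring

theorem isLocalization_away_sup_adjoin (hs : s ∈ S) (hsu : s * u = 1) :
    letI := (Subalgebra.inclusion (le_sup_left : S ≤ S ⊔ Algebra.adjoin k {u})).toAlgebra
    IsLocalization.Away (⟨s, hs⟩ : S) ↥(S ⊔ Algebra.adjoin k {u}) := by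
  let := (Subalgebra.inclusion (le_sup_left : S ≤ S ⊔ Algebra.adjoin k {u})).toAlgebra
  refine .mk _ ?_ (fun q ↦ ?_) fun a b hab ↦ ?_
  · have hu : u ∈ S ⊔ Algebra.adjoin k {u} :=
      le_sup_right (a := S) (Algebra.self_mem_adjoin_singleton k u)
    exact .of_mul_eq_one ⟨u, hu⟩ (Subtype.ext hsu)
  · obtain ⟨N, hN⟩ := exists_mul_pow_mem_of_mem_sup_adjoin hs hsu q.2
    exact ⟨N, ⟨_, hN⟩, rfl⟩
  · exact ⟨0, by simpa using Subalgebra.inclusion_injective le_sup_left hab⟩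

theorem exists_le_sup_adjoin_of_fg {T : Subalgebra k Q} (hT : T.FG) (A : Type*) [CommRing A]
    [Algebra k A] [Algebra A Q] [IsScalarTower k A Q] [IsFractionRing A Q] :
    ∃ s ∈ (IsScalarTower.toAlgHom k A Q).range, ∃ u, s * u = 1 ∧
      T ≤ (IsScalarTower.toAlgHom k A Q).range ⊔ Algebra.adjoin k {u} := by
  obtain ⟨t, rfl⟩ := hT
  obtain ⟨b, hb⟩ := IsLocalization.exist_integer_multiples_of_finset A⁰ t
  obtain ⟨u, hu⟩ := (IsLocalization.map_units Q b).exists_right_inv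
  refine ⟨algebraMap A Q b, ⟨b, rfl⟩, u, hu, Algebra.adjoin_le fun q hq ↦ ?_⟩
  obtain ⟨a, ha⟩ := hb q hq
  have hq : q = algebraMap A Q a * u := by
    rw [ha, Algebra.smul_def, mul_right_comm, hu, one_mul]
  rw [hq]
  exact mul_mem (le_sup_left (b := Algebra.adjoin k {u}) ⟨a, rfl⟩)
    (le_sup_right (b := Algebra.adjoin k {u}) (Algebra.self_mem_adjoin_singleton k u))

end Subalgebra

theorem birationalOver_specOver_sup_adjoin {k Q : Type u} [CommRing k] [CommRing Q] [Algebra k Q]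
    {S : Subalgebra k Q} {s u : Q} (hs : s ∈ S) (hsu : s * u = 1) :
    BirationalOver (specOver k ↥(S ⊔ Algebra.adjoin k {u})) (specOver k S) := by
  let := (Subalgebra.inclusion (le_sup_left : S ≤ S ⊔ Algebra.adjoin k {u})).toAlgebra
  have := isLocalization_away_sup_adjoin hs hsu
  have : FaithfulSMul S ↥(S ⊔ Algebra.adjoin k {u}) :=
    (faithfulSMul_iff_algebraMap_injective _ _).mpr (Subalgebra.inclusion_injective le_sup_left)
  exact birationalOver_specOver_of_isLocalization_away (⟨s, hs⟩ : S)

theorem birationalOver_specOver_range {k A Q : Type u} [CommRing k] [CommRing A] [CommRing Q]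
    [Algebra k A] [Algebra k Q] {f : A →ₐ[k] Q} (hf : Function.Injective f) :
    BirationalOver (specOver k A) (specOver k f.range) :=
  birationalOver_specOver_of_algEquiv (AlgEquiv.ofInjective f hf).symm

-- Inverting in each algebra a common denominator of generators of the other one gives the same
-- subalgebra of the common total fraction ring.
theorem birationalOver_specOver_of_isFractionRing {k A B : Type u} (Q : Type u) [CommRing k]
    [CommRing A] [CommRing B] [CommRing Q] [Algebra k A] [Algebra k B] [Algebra k Q] [Algebra A Q]
    [Algebra B Q] [IsScalarTower k A Q] [IsScalarTower k B Q] [Algebra.FiniteType k A]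
    [Algebra.FiniteType k B] [IsFractionRing A Q] [IsFractionRing B Q] :
    BirationalOver (specOver k A) (specOver k B) := by
  let S := (IsScalarTower.toAlgHom k A Q).range
  let T := (IsScalarTower.toAlgHom k B Q).range
  have range_fg {C : Type u} [CommRing C] [Algebra k C] [Algebra.FiniteType k C] (f : C →ₐ[k] Q) :
      f.range.FG := Algebra.map_top f ▸ Algebra.FiniteType.out.map f
  obtain ⟨s, hs, u, hsu, hTS⟩ :=
    exists_le_sup_adjoin_of_fg (range_fg (IsScalarTower.toAlgHom k B Q)) A
  obtain ⟨t, ht, v, htv, hST⟩ :=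
    exists_le_sup_adjoin_of_fg (range_fg (IsScalarTower.toAlgHom k A Q)) B
  let U := Algebra.adjoin k {u}
  let V := Algebra.adjoin k {v}
  have hSUV : (S ⊔ U) ⊔ V = (T ⊔ V) ⊔ U :=
    le_antisymm (sup_le (sup_le (hST.trans le_sup_left) le_sup_right)
      (le_sup_right.trans le_sup_left))
      (sup_le (sup_le (hTS.trans le_sup_left) le_sup_right) (le_sup_right.trans le_sup_left))
  have hS' : BirationalOver (specOver k ↥((S ⊔ U) ⊔ V)) (specOver k S) :=
    (birationalOver_specOver_sup_adjoin (hTS ht) htv).trans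
      (birationalOver_specOver_sup_adjoin hs hsu)
  have hT' : BirationalOver (specOver k ↥((S ⊔ U) ⊔ V)) (specOver k T) :=
    hSUV ▸ (birationalOver_specOver_sup_adjoin (hST hs) hsu).trans
      (birationalOver_specOver_sup_adjoin ht htv)
  exact (birationalOver_specOver_range (IsFractionRing.injective A Q)).trans <| hS'.symm.trans <|
    hT'.trans (birationalOver_specOver_range (IsFractionRing.injective B Q)).symm

/-! ### Irreducible components -/

section Topology

open Topology

theorem exists_forall_isOpenEmbedding_topologicalKrullDim_eq {X : Type*} [TopologicalSpace X]
    {n : ℕ} (hn : topologicalKrullDim X = n) :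
    ∃ x : X, ∀ {W : Type u} [TopologicalSpace W] {f : W → X}, IsOpenEmbedding f →
      x ∈ Set.range f → topologicalKrullDim W = n := by
  obtain ⟨p, hp⟩ := Order.le_krullDim_iff.mp hn.ge
  obtain ⟨x, hx⟩ := p.head.isIrreducible.nonempty
  refine ⟨x, fun {W} _ f hf hxf ↦ (hn ▸ hf.isInducing.topologicalKrullDim_le).antisymm ?_⟩
  have hne (j) : (f ⁻¹' (p j : Set X)).Nonempty := by
    obtain ⟨w, rfl⟩ := hxf
    exact ⟨w, p.monotone (Fin.zero_le j) hx⟩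
  let e := IrreducibleCloseds.orderIsoOfIsOpenEmbedding f hf
  let q : LTSeries (IrreducibleCloseds W) :=
    { length := p.length
      toFun j := e.symm ⟨p j, hne j⟩
      step j := e.symm.strictMono (p.step j) }
  exact Order.le_krullDim_iff.mpr ⟨q, hp⟩

theorem closure_eq_of_mem_irreducibleComponents {X : Type*} [TopologicalSpace X] {T U : Set X}
    (hT : T ∈ irreducibleComponents X) (hU : IsOpen U) (hU' : IsIrreducible U)
    (hTU : (T ∩ U).Nonempty) : closure U = T := by
  have hsub : T ⊆ closure U :=
    (subset_closure_inter_of_isPreirreducible_of_isOpen hT.1.2 hU hTU).trans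
      (closure_mono Set.inter_subset_right)
  exact (hT.2 hU'.closure hsub).antisymm hsub

theorem disjoint_of_closure_mem_irreducibleComponents {X : Type*} [TopologicalSpace X]
    {U V : Set X} (hU : closure U ∈ irreducibleComponents X) (hV : IsOpen V) (hV' : IsIrreducible V)
    (hUV : closure U ≠ closure V) : Disjoint U V := by
  by_contra h
  exact hUV (closure_eq_of_mem_irreducibleComponents hU hV hV'
    ((Set.not_disjoint_iff_nonempty_inter.mp h).mono
      (Set.inter_subset_inter_left V subset_closure))).symm

end Topology

theorem topologicalKrullDim_zeroLocus {R : Type*} [CommRing R] (I : Ideal R) :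
    topologicalKrullDim (PrimeSpectrum.zeroLocus (I : Set R)) = ringKrullDim (R ⧸ I) := by
  have hI := range_comap_of_surjective _ _ (Ideal.Quotient.mk_surjective (I := I))
  rw [Ideal.mk_ker] at hI
  rw [← PrimeSpectrum.topologicalKrullDim_eq_ringKrullDim, ← hI]
  exact (PrimeSpectrum.isClosedEmbedding_comap_of_surjective _ _
    Ideal.Quotient.mk_surjective).isEmbedding.toHomeomorph.symm.isHomeomorph.topologicalKrullDim_eq

theorem exists_notMem_forall_mul_eq_zero_of_mem_minimalPrimes {R : Type*} [CommRing R]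
    [IsNoetherianRing R] [_root_.IsReduced R] {p : Ideal R} (hp : p ∈ minimalPrimes R) :
    ∃ f ∉ p, ∀ x ∈ p, f * x = 0 := by
  have hbot : (⊥ : Ideal R).colon {(1 : R)} = ⊥ := by ext; simp [Submodule.mem_colon_singleton]
  obtain ⟨f, hf⟩ := Submodule.exists_eq_colon_of_mem_minimalPrimes (N := (⊥ : Ideal R))
    (x := (1 : R)) (I := p) (by rwa [hbot])
  have mem_p_iff (x : R) : x ∈ p ↔ f * x = 0 := by
    rw [hf, Submodule.mem_colon_singleton, smul_eq_mul, mul_comm, Submodule.mem_bot]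
  refine ⟨f, fun hfp ↦ hp.1.1.one_notMem ?_, fun x ↦ (mem_p_iff x).mp⟩
  have hf0 : f = 0 := IsReduced.eq_zero f ⟨2, by rw [sq, (mem_p_iff f).mp hfp]⟩
  rw [mem_p_iff, hf0, zero_mul]

theorem isLocalization_away_of_isLocalization_away_quotient {R L : Type*} [CommRing R] [CommRing L]
    {I : Ideal R} {f : R} (hf : ∀ x ∈ I, f * x = 0) [Algebra R L] [Algebra (R ⧸ I) L]
    [IsScalarTower R (R ⧸ I) L] [IsLocalization.Away (Ideal.Quotient.mk I f) L] :
    IsLocalization.Away f L := by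
  have algebraMap_mk (a : R) : algebraMap R L a = algebraMap (R ⧸ I) L (Ideal.Quotient.mk I a) :=
    IsScalarTower.algebraMap_apply R (R ⧸ I) L a
  refine .mk f ?_ (fun s ↦ ?_) fun a b hab ↦ ?_
  · exact algebraMap_mk f ▸ IsLocalization.Away.algebraMap_isUnit (Ideal.Quotient.mk I f)
  · obtain ⟨N, a, ha⟩ := IsLocalization.Away.surj (Ideal.Quotient.mk I f) s
    obtain ⟨a, rfl⟩ := Ideal.Quotient.mk_surjective a
    exact ⟨N, a, by rw [algebraMap_mk, algebraMap_mk, ha]⟩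
  · rw [algebraMap_mk, algebraMap_mk] at hab
    obtain ⟨N, hN⟩ := IsLocalization.Away.exists_of_eq (Ideal.Quotient.mk I f) hab
    rw [← map_pow, ← map_mul, ← map_mul, Ideal.Quotient.eq] at hN
    exact ⟨N + 1, by linear_combination hf _ hN⟩

theorem trdeg_fractionRing_localization_away_eq {k R : Type*} [Field k] [CommRing R] [IsDomain R]
    [Algebra k R] [Algebra.FiniteType k R] {n : ℕ} (hn : ringKrullDim R = n) {f : R} (hf : f ≠ 0)
    [IsDomain (Localization.Away f)] :
    Algebra.trdeg k (FractionRing (Localization.Away f)) = n := by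
  have hf' : Submonoid.powers f ≤ R⁰ := powers_le_nonZeroDivisors_of_noZeroDivisors hf
  have : FaithfulSMul R (Localization.Away f) :=
    (faithfulSMul_iff_algebraMap_injective _ _).mpr (IsLocalization.injective _ hf')
  have : FaithfulSMul R (FractionRing (Localization.Away f)) := .trans _ (Localization.Away f) _
  have : Algebra.IsAlgebraic R (Localization.Away f) :=
    IsLocalization.isAlgebraic _ (Submonoid.powers f)
  have : Algebra.IsAlgebraic (Localization.Away f) (FractionRing (Localization.Away f)) :=
    IsLocalization.isAlgebraic _ (Localization.Away f)⁰
  have : Algebra.IsAlgebraic R (FractionRing (Localization.Away f)) :=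
    .trans R (Localization.Away f) _
  exact trdeg_eq_of_ringKrullDim_eq_of_isAlgebraic hn

theorem exists_isOpenImmersion_specOver {k : Type u} [CommRing k] {Z : Scheme.{u}}
    (φ : Z ⟶ Spec (CommRingCat.of k)) [LocallyOfFiniteType φ] (z : Z) :
    ∃ (R : Type u) (_ : CommRing R) (_ : Algebra k R) (j : Spec (CommRingCat.of R) ⟶ Z),
      Algebra.FiniteType k R ∧ IsOpenImmersion j ∧ z ∈ Set.range j ∧ j ≫ φ = specOver k R := by
  obtain ⟨R, j, hz, hj⟩ : ∃ (R : CommRingCat.{u}) (j : Spec R ⟶ Z),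
      z ∈ Set.range j ∧ IsOpenImmersion j :=
    ⟨_, Z.affineOpenCover.f (Z.affineOpenCover.idx z), Z.affineOpenCover.covers z, inferInstance⟩
  obtain ⟨ψ, hψ⟩ := Spec.map_surjective (j ≫ φ)
  have hψft : LocallyOfFiniteType (Spec.map ψ) := hψ ▸ inferInstance
  exact ⟨R, inferInstance, ψ.hom.toAlgebra, j,
    (HasRingHomProperty.Spec_iff (P := @LocallyOfFiniteType)).mp hψft, hj, hz, hψ.symm⟩

theorem exists_mem_minimalPrimes_zeroLocus_eq {R : Type*} [CommRing R]
    {T : Set (PrimeSpectrum R)} (hT : T ∈ irreducibleComponents (PrimeSpectrum R)) :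
    ∃ p ∈ minimalPrimes R, PrimeSpectrum.zeroLocus (p : Set R) = T := by
  have hTc : closure T = T := (isClosed_of_mem_irreducibleComponents T hT).closure_eq
  exact ⟨PrimeSpectrum.vanishingIdeal T,
    PrimeSpectrum.vanishingIdeal_mem_minimalPrimes.mpr (hTc.symm ▸ hT),
    by rw [PrimeSpectrum.zeroLocus_vanishingIdeal_eq_closure, hTc]⟩

theorem exists_isOpenImmersion_specOver_minimalPrimes {k : Type u} [CommRing k] {Z : Scheme.{u}}
    (φ : Z ⟶ Spec (CommRingCat.of k)) [LocallyOfFiniteType φ] {T : Set Z}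
    (hT : T ∈ irreducibleComponents Z) {n : ℕ} (hn : topologicalKrullDim T = n) :
    ∃ (R : Type u) (_ : CommRing R) (_ : Algebra k R) (j : Spec (CommRingCat.of R) ⟶ Z),
      Algebra.FiniteType k R ∧ IsOpenImmersion j ∧ j ≫ φ = specOver k R ∧
      ∃ p ∈ minimalPrimes R, ringKrullDim (R ⧸ p) = n ∧
        PrimeSpectrum.zeroLocus (p : Set R) = j ⁻¹' T := by
  obtain ⟨x, hx⟩ := exists_forall_isOpenEmbedding_topologicalKrullDim_eq hn
  obtain ⟨R, _, _, j, hft, hj, hxj, hjφ⟩ := exists_isOpenImmersion_specOver φ x.1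
  obtain ⟨p, hp, hpT⟩ := exists_mem_minimalPrimes_zeroLocus_eq
    (preimage_mem_irreducibleComponents hT j.isOpenEmbedding ⟨x, x.2, hxj⟩)
  refine ⟨R, _, _, j, hft, hj, hjφ, p, hp, ?_, hpT⟩
  rw [← topologicalKrullDim_zeroLocus, hpT]
  obtain ⟨y, hy⟩ := hxj
  exact hx (Set.restrictPreimage_isOpenEmbedding T j.isOpenEmbedding)
    ⟨⟨y, Set.mem_preimage.mpr (hy ▸ x.2)⟩, Subtype.ext hy⟩

theorem isIrreducible_range_of_isDomain {A : Type u} [CommRing A] [IsDomain A] {Z : Scheme.{u}}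
    (j : Spec (CommRingCat.of A) ⟶ Z) : IsIrreducible (Set.range j) :=
  Set.image_univ ▸
    (IrreducibleSpace.isIrreducible_univ (PrimeSpectrum A)).image j j.continuous.continuousOn

theorem exists_isOpenImmersion_specOver_isDomain {k : Type u} [Field k] {Z : Scheme.{u}}
    [IsReduced Z] (φ : Z ⟶ Spec (CommRingCat.of k)) [LocallyOfFiniteType φ] {T : Set Z}
    (hT : T ∈ irreducibleComponents Z) {n : ℕ} (hn : topologicalKrullDim T = n) :
    ∃ (A : Type u) (_ : CommRing A) (_ : IsDomain A) (_ : Algebra k A)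
      (j : Spec (CommRingCat.of A) ⟶ Z), Algebra.FiniteType k A ∧
      Algebra.trdeg k (FractionRing A) = n ∧ IsOpenImmersion j ∧ closure (Set.range j) = T ∧
      j ≫ φ = specOver k A := by
  obtain ⟨R, _, _, j, hft, hj, hjφ, p, hp, hpn, hpT⟩ :=
    exists_isOpenImmersion_specOver_minimalPrimes φ hT hn
  have : p.IsPrime := hp.1.1
  have : IsNoetherianRing R := Algebra.FiniteType.isNoetherianRing k R
  have : _root_.IsReduced R := (affine_isReduced_iff (.of R)).mp (isReduced_of_isOpenImmersion j)
  obtain ⟨f, hfp, hf⟩ := exists_notMem_forall_mul_eq_zero_of_mem_minimalPrimes hp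
  have hf0 : Ideal.Quotient.mk p f ≠ 0 := fun h ↦ hfp (Ideal.Quotient.eq_zero_iff_mem.mp h)
  let A := Localization.Away (Ideal.Quotient.mk p f)
  have : IsLocalization.Away f A := isLocalization_away_of_isLocalization_away_quotient hf
  have hA : IsDomain A := IsLocalization.Away.isDomain _ hf0
  have : Algebra.FiniteType k A := .trans (S := R) inferInstance inferInstance
  have hi : IsOpenImmersion (specOver R A) := .of_isLocalization f
  have hmeet : (T ∩ Set.range (specOver R A ≫ j)).Nonempty := by
    obtain ⟨q, hq⟩ : (⟨p, ‹_›⟩ : PrimeSpectrum R) ∈ Set.range (specOver R A) :=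
      (PrimeSpectrum.localization_away_comap_range A f).ge hfp
    have hjp : j (⟨p, ‹_›⟩ : PrimeSpectrum R) ∈ T :=
      hpT.le ((PrimeSpectrum.mem_zeroLocus _ _).mpr le_rfl)
    exact ⟨_, hjp, q, congrArg j hq⟩
  refine ⟨A, inferInstance, hA, inferInstance, specOver R A ≫ j, inferInstance,
    trdeg_fractionRing_localization_away_eq hpn hf0, inferInstance,
    closure_eq_of_mem_irreducibleComponents hT (specOver R A ≫ j).isOpenEmbedding.isOpen_range
      (isIrreducible_range_of_isDomain _) hmeet, ?_⟩
  rw [Category.assoc, hjφ, ← Spec.map_comp, ← CommRingCat.ofHom_comp,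
    ← IsScalarTower.algebraMap_eq]

/-! ### Disjoint unions of affine charts -/

section DisjointUnion

variable {ι : Type u}

theorem birationalOver_sigmaDesc {S Z : Scheme.{u}} {φ : Z ⟶ S} {X : ι → Scheme.{u}}
    {f : ∀ i, X i ⟶ S} (j : ∀ i, X i ⟶ Z) [∀ i, IsOpenImmersion (j i)]
    (hj : Pairwise (Disjoint on fun i ↦ Set.range (j i)))
    (hdense : Dense (⋃ i, Set.range (j i))) (hjφ : ∀ i, j i ≫ φ = f i) :
    BirationalOver (Limits.Sigma.desc f) φ := by
  have : IsOpenImmersion (Limits.Sigma.desc j) := isOpenImmersion_sigmaDesc _ j hj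
  have : IsDominant (Limits.Sigma.desc j) := by
    refine ⟨hdense.mono (Set.iUnion_subset fun i ↦ ?_)⟩
    rw [← Limits.Sigma.ι_desc j i, Scheme.Hom.comp_base, TopCat.coe_comp]
    exact Set.range_comp_subset_range _ _
  refine Scheme.Hom.birationalOver (Limits.Sigma.desc j) _ _ (Limits.Sigma.hom_ext _ _ fun i ↦ ?_)
  rw [Limits.Sigma.ι_desc_assoc, Limits.Sigma.ι_desc, hjφ]

variable {k : Type u} [CommRing k] (A : ι → Type u) [∀ i, CommRing (A i)] [∀ i, Algebra k (A i)]

theorem sigmaSpec_comp_specOver :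
    sigmaSpec (fun i ↦ .of (A i)) ≫ specOver k (∀ i, A i) =
      Limits.Sigma.desc fun i ↦ specOver k (A i) := by
  refine Limits.Sigma.hom_ext _ _ fun i ↦ ?_
  rw [ι_sigmaSpec_assoc, Limits.Sigma.ι_desc, ← Spec.map_comp, ← CommRingCat.ofHom_comp]
  rfl

variable [Finite ι]

theorem birationalOver_sigmaDesc_specOver_pi :
    BirationalOver (Limits.Sigma.desc fun i ↦ specOver k (A i)) (specOver k (∀ i, A i)) :=
  Scheme.Hom.birationalOver (sigmaSpec fun i ↦ .of (A i)) _ _ (sigmaSpec_comp_specOver A)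

theorem finiteType_pi [∀ i, Algebra.FiniteType k (A i)] : Algebra.FiniteType k (∀ i, A i) := by
  have hA (i) : LocallyOfFiniteType (specOver k (A i)) :=
    HasRingHomProperty.Spec_iff.mpr (RingHom.finiteType_algebraMap.mpr inferInstance)
  have h : LocallyOfFiniteType (specOver k (∀ i, A i)) := by
    rw [(IsIso.eq_inv_comp _).mpr (sigmaSpec_comp_specOver A)]
    have : IsZariskiLocalAtSource @LocallyOfFiniteType.{u} :=
      HasRingHomProperty.instIsZariskiLocalAtSource
    have := IsZariskiLocalAtSource.sigmaDesc hA
    infer_instance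
  exact RingHom.finiteType_algebraMap.mp (HasRingHomProperty.Spec_iff.mp h)

end DisjointUnion

theorem isFractionRing_pi_fractionRing {ι : Type*} [Finite ι] (A : ι → Type*) [∀ i, CommRing (A i)]
    [∀ i, IsDomain (A i)] : IsFractionRing (∀ i, A i) (∀ i, FractionRing (A i)) :=
  isFractionRing_of_isLocalization_of_isArtinianRing (M := .pi .univ fun i ↦ (A i)⁰)
    fun _ ha ↦ mem_nonZeroDivisors_iff_right.mpr fun _ hx ↦ funext fun i ↦
      mul_right_mem_nonZeroDivisors_eq_zero_iff (ha i trivial) |>.mp (congrFun hx i)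

theorem exists_birationalOver_specOver_pi {k : Type u} [Field k] {Z : Scheme.{u}} [IsReduced Z]
    (φ : Z ⟶ Spec (CommRingCat.of k)) [LocallyOfFiniteType φ] [QuasiCompact φ] {n : ℕ}
    (hn : ∀ T ∈ irreducibleComponents Z, topologicalKrullDim T = n) :
    ∃ (ι : Type u) (_ : Finite ι) (A : ι → Type u) (_ : ∀ i, CommRing (A i))
      (_ : ∀ i, IsDomain (A i)) (_ : ∀ i, Algebra k (A i)), (∀ i, Algebra.FiniteType k (A i)) ∧
      (∀ i, Algebra.trdeg k (FractionRing (A i)) = n) ∧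
      BirationalOver (specOver k (∀ i, A i)) φ := by
  have : IsLocallyNoetherian Z := LocallyOfFiniteType.isLocallyNoetherian φ
  have : CompactSpace Z := QuasiCompact.compactSpace_of_compactSpace φ
  have : IsNoetherian Z := {}
  have hfin : Finite (irreducibleComponents Z) := finite_irreducibleComponents_of_isNoetherian
  choose A _ _ _ j hft htr hj hjT hjφ using fun T : irreducibleComponents Z ↦
    exists_isOpenImmersion_specOver_isDomain φ T.2 (hn T T.2)
  have hdisj : Pairwise (Disjoint on fun T ↦ Set.range (j T)) := fun T T' hT ↦
    disjoint_of_closure_mem_irreducibleComponents ((hjT T).symm ▸ T.2)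
      (j T').isOpenEmbedding.isOpen_range (isIrreducible_range_of_isDomain (j T'))
      (hjT T ▸ hjT T' ▸ Subtype.coe_ne_coe.mpr hT)
  have hdense : Dense (⋃ T, Set.range (j T)) := fun x ↦ by
    have hx : x ∈ closure (Set.range (j ⟨_, irreducibleComponent_mem_irreducibleComponents x⟩)) :=
      hjT _ ▸ mem_irreducibleComponent
    exact closure_mono (Set.subset_iUnion _ _) hx
  exact ⟨_, hfin, A, _, inferInstance, _, hft, htr,
    (birationalOver_sigmaDesc_specOver_pi A).symm.trans
      (birationalOver_sigmaDesc j hdisj hdense hjφ)⟩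

/-! ### Smooth hypersurface models -/

theorem isReduced_of_flat_of_surjective {X Z : Scheme.{u}} (q : X ⟶ Z) [Flat q] [Surjective q]
    [IsReduced X] : IsReduced Z := by
  have (z : Z) : _root_.IsReduced (Z.presheaf.stalk z) := by
    obtain ⟨x, rfl⟩ := q.surjective z
    have := Flat.stalkMap q x
    algebraize [(q.stalkMap x).hom]
    have : IsLocalHom (algebraMap (Z.presheaf.stalk (q x)) (X.presheaf.stalk x)) :=
      inferInstanceAs (IsLocalHom (q.stalkMap x).hom)
    have : Module.FaithfullyFlat (Z.presheaf.stalk (q x)) (X.presheaf.stalk x) :=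
      .of_flat_of_isLocalHom
    exact isReduced_of_injective (algebraMap _ (X.presheaf.stalk x))
      (FaithfulSMul.algebraMap_injective _ _)
  exact isReduced_of_isReduced_stalk Z

theorem isReduced_of_isReduced_pullback_specOver {k K : Type u} [CommRing k] [CommRing K]
    [Algebra k K] [Module.FaithfullyFlat k K] {Z : Scheme.{u}} (φ : Z ⟶ Spec (CommRingCat.of k))
    [IsReduced (Limits.pullback φ (specOver k K))] : IsReduced Z := by
  obtain ⟨_, _⟩ : Flat (specOver k K) ∧ Surjective (specOver k K) :=
    (flat_and_surjective_SpecMap_iff _).mpr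
      (RingHom.faithfullyFlat_algebraMap_iff.mpr inferInstance)
  exact isReduced_of_flat_of_surjective (Limits.pullback.fst φ (specOver k K))

theorem areBirationalOver_of_birationalOver {S X Y : Scheme} {φX : X ⟶ S} {φY : Y ⟶ S}
    (h : BirationalOver φX φY) : AreBirationalOver φX φY :=
  let ⟨f, hf⟩ := h
  ⟨f.source, f.target, f.iso, f.dense_source, f.dense_target, hf⟩

theorem exists_smooth_birational_hypersurface_general {k : Type u} [Field k] [PerfectField k]
    {n : ℕ} {Z : Scheme.{u}} [IsReduced Z] (φ : Z ⟶ Spec (CommRingCat.of k))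
    [LocallyOfFiniteType φ] [QuasiCompact φ]
    (hpure : ∀ T ∈ irreducibleComponents Z, topologicalKrullDim T = n)
    (hnk : 0 < n ∨ Infinite k) :
    ∃ g : MvPolynomial (Fin (n + 1)) k,
      Smooth (specOver k (MvPolynomial (Fin (n + 1)) k ⧸ Ideal.span {g})) ∧
      BirationalOver φ (specOver k (MvPolynomial (Fin (n + 1)) k ⧸ Ideal.span {g})) := by
  obtain ⟨ι, _, A, _, _, _, _, htr, hA⟩ := exists_birationalOver_specOver_pi φ hpure
  obtain ⟨g, _, hg, _, _⟩ := exists_separable_mvPolynomial_isFractionRing_adjoinRoot_pi hnk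
    (fun i ↦ FractionRing (A i)) htr
  obtain ⟨e⟩ := nonempty_quotient_finSuccEquiv_symm_algEquiv g
  have : Algebra.Smooth k (MvPolynomial (Fin n) k) := ⟨inferInstance, inferInstance⟩
  have : Algebra.Smooth k (AdjoinRoot g) := smooth_adjoinRoot hg
  have := Algebra.Smooth.of_equiv e
  have : Algebra.FiniteType k (∀ i, A i) := finiteType_pi A
  have := isFractionRing_pi_fractionRing A
  exact ⟨_, smooth_specOver k _, hA.symm.trans <|
    (birationalOver_specOver_of_isFractionRing (∀ i, FractionRing (A i))).trans
      (birationalOver_specOver_of_algEquiv e).symm⟩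

/-- **Theorem A.2** of the paper.  Let `k` be a perfect field and let `Z` be a
geometrically reduced, separated algebraic variety over `k`, pure of dimension
`n`, where either `n > 0` or `k` is infinite.  Then there exists a polynomial
`g ∈ k[x₁, …, x_n, y]` such that the affine hypersurface `V : g = 0` in
`𝔸_k^{n+1}` is smooth over `k` and birational to `Z`. -/
theorem exists_smooth_birational_hypersurface
    (k : Type) [Field k] [PerfectField k] (n : ℕ)
    (Z : Scheme) (φ : Z ⟶ SpecOf k)
    [LocallyOfFiniteType φ] [QuasiCompact φ] [IsSeparated φ]
    (hgeomred : IsReduced (Limits.pullback φ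
      (Spec.map (CommRingCat.ofHom (algebraMap k (AlgebraicClosure k))))))
    (hpure : ∀ T ∈ irreducibleComponents (Z : Type),
      topologicalKrullDim T = (n : ℕ∞))
    (hnk : 0 < n ∨ Infinite k) :
    ∃ g : MvPolynomial (Fin (n + 1)) k,
      IsSmooth (Spec.map (CommRingCat.ofHom
        (algebraMap k (MvPolynomial (Fin (n + 1)) k ⧸ Ideal.span {g})))) ∧
      AreBirationalOver φ
        (Spec.map (CommRingCat.ofHom
          (algebraMap k (MvPolynomial (Fin (n + 1)) k ⧸ Ideal.span {g})))) := by
  have := isReduced_of_isReduced_pullback_specOver (K := AlgebraicClosure k) φ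
  obtain ⟨g, hg, h⟩ := exists_smooth_birational_hypersurface_general φ hpure hnk
  exact ⟨g, hg, areBirationalOver_of_birationalOver h⟩

end BakerModels
end
end
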